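/- arXiv:1111.3157 — 2 statements merged into one kernel-verified Lean document; each statement's English description precedes it below -/
import Mathlib

section
/- Let f : ℝ → ℂ be a continuous even function which is evenly positive definite, i.e. ∫_ℝ f(x)·(φ ∗ φ*)(x) dx ≥ 0 for every even function φ ∈ C_c^∞(ℝ). Then there exist positive even Borel measures μ₁ and μ₂ on ℝ such that μ₁ is finite, μ₂ satisfies ∫_ℝ e^{a|λ|} dμ₂(λ) < ∞ for every a > 0, and f(x) = ∫_ℝ cos(λx) dμ₁(λ) + ∫_ℝ cosh(λx) dμ₂(λ) for all x ∈ ℝ. -/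
/-!
The proof discretises and then passes to a weak limit.

Mollified point masses are admissible test functions, so the hypothesis becomes a statement about
kernels: `f` is a real function `g`, and `(x, y) ↦ g (x + y) + g (x - y)` is positive semidefinite
(`exists_real_kernel`).

Restrict `g` to a finite grid `(h / 2) * n`. The kernel is then, up to a factor `2`, the Gram matrix
of finitely many vectors `x 0, x 1, …`, and the averaged shift `x n ↦ (x (n + 1) + x (n - 1)) / 2`
compresses to a symmetric operator in finite dimension. In an eigenbasis the coordinates of `x n`
obey the Chebyshev recurrence, so `g (n * h / 2) = ∑ k, w k * T n (t k)` with nonnegative weights and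
real nodes (`exists_chebyshev_repr`). For even indices, `T (2 * n)` at a real node is `cos (u * n * h)`
or `cosh (u * n * h)`; both are values of one family `evenChar u`, with the sign of `u` distinguishing
the cases (`exists_grid_repr`).

Take `h = 1 / k!` and normalise `g 0 = 1`. The resulting discrete probability measures on the
`u`-axis have uniformly bounded exponential moments in the hyperbolic direction `u < 0`, because
`cosh` is controlled by the value of `g` itself. In the direction `u > 0` there is no mass at infinity
by a grid version of Lévy's estimate, which uses continuity of `g` at `0`
(`sum_weight_upper_tail_le`). So the sequence is tight (`exists_measure_seq`). By Prokhorov's theorem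
a subsequence converges weakly. The unbounded functions `evenChar · q` pass to the limit since they are
uniformly integrable, and the limit measure represents `g` at rational points, hence everywhere by
continuity (`exists_probabilityMeasure_repr`).

Finally, the part of the limit measure on `u ≥ 0` gives `μ₁` and the part on `u < 0` gives `μ₂`; both
are symmetrised by averaging with their reflections, which does not affect integrals of even
functions.
-/

open MeasureTheory Filter
open scoped ComplexOrder

section Helpers

open scoped Topology Convolution

/-! ### From test functions to positive semidefinite kernels -/

/-- The self-convolutions of normalised bumps form an approximate identity: translated to `p` they
recover the value `f p`. -/
lemma tendsto_integral_mul_bump_convolution (f : ℝ → ℂ) (hf : Continuous f)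
    (ρ : ℕ → ContDiffBump (0 : ℝ)) (hρ : Tendsto (fun n => (ρ n).rOut) atTop (𝓝 0)) (p : ℝ) :
    Tendsto (fun n => ∫ x : ℝ, f x *
      ((∫ y : ℝ, (ρ n).normed volume (x - p - y) * (ρ n).normed volume y : ℝ) : ℂ))
      atTop (𝓝 (f p)) := by
  let r : ℕ → ℝ → ℝ := fun n => (ρ n).normed volume
  let ψ : ℕ → ℝ → ℝ := fun n => r n ⋆[ContinuousLinearMap.lsmul ℝ ℝ, volume] r n
  have hψ : ∀ n x, ψ n x = ∫ y : ℝ, r n (x - y) * r n y := by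
    intro n x
    simp only [ψ, convolution_def, ContinuousLinearMap.lsmul_apply, smul_eq_mul]
    exact integral_congr_ae (.of_forall fun y => mul_comm _ _)
  have hψ0 : ∀ n x, 0 ≤ ψ n x := by
    intro n x
    rw [hψ]
    exact integral_nonneg fun y => mul_nonneg ((ρ n).nonneg_normed _) ((ρ n).nonneg_normed _)
  have hψ1 : ∀ n, ∫ x, ψ n x = 1 := by
    intro n
    have := integral_convolution (ContinuousLinearMap.lsmul ℝ ℝ) (μ := volume) (ν := volume)
      ((ρ n).integrable_normed (μ := volume)) ((ρ n).integrable_normed (μ := volume))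
    simp only [ψ, r]
    rw [this]
    simp [(ρ n).integral_normed]
  have hψe : ∀ n x, ψ n (-x) = ψ n x := by
    intro n x
    rw [hψ, hψ, ← integral_neg_eq_self]
    refine integral_congr_ae (.of_forall fun y => ?_)
    simp only [r]
    rw [(ρ n).normed_neg, show -x - -y = -(x - y) by ring, (ρ n).normed_neg]
  have hψs : ∀ n, Function.support (ψ n) ⊆ Metric.ball 0 ((ρ n).rOut + (ρ n).rOut) := by
    intro n
    refine (support_convolution_subset _).trans ?_
    simp only [r]
    rw [(ρ n).support_normed_eq, ball_add_ball (ρ n).rOut_pos (ρ n).rOut_pos, add_zero]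
  have key : ∀ n, ∫ x : ℝ, f x * ((∫ y : ℝ, r n (x - p - y) * r n y : ℝ) : ℂ)
      = (ψ n ⋆[ContinuousLinearMap.lsmul ℝ ℝ, volume] f) p := by
    intro n
    rw [convolution_def, ← integral_sub_left_eq_self _ volume p]
    refine integral_congr_ae (.of_forall fun y => ?_)
    simp only [ContinuousLinearMap.lsmul_apply]
    rw [← hψ, show p - y - p = -y by ring, hψe, Complex.real_smul, mul_comm]
  simp only [r] at key
  simp_rw [key]
  refine convolution_tendsto_right (g := fun _ => f) (k := fun _ => p)
    (.of_forall fun n x => hψ0 n x) (.of_forall hψ1) ?_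
    (.of_forall fun _ => hf.aestronglyMeasurable) ?_ tendsto_const_nhds
  · rw [tendsto_smallSets_iff]
    intro t ht
    obtain ⟨ε, hε, hεt⟩ := Metric.mem_nhds_iff.1 ht
    have h2 : Tendsto (fun n => (ρ n).rOut + (ρ n).rOut) atTop (𝓝 0) := by
      simpa using hρ.add hρ
    filter_upwards [h2.eventually (gt_mem_nhds hε)] with n hn
    exact (hψs n).trans ((Metric.ball_subset_ball hn.le).trans hεt)
  · exact (hf.tendsto p).comp tendsto_snd

/-- Positivity transferred from test functions to even finite point configurations: `p` lists the
points, `a` the masses, and `σ` realises the reflection `x ↦ -x` on the index set, so that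
`∑ k, a k • δ (p k)` is an even discrete measure. -/
lemma sum_nonneg_of_symmetric {κ : Type*} [Fintype κ]
    (f : ℝ → ℂ) (hf_cont : Continuous f)
    (hf_pd : ∀ φ : ℝ → ℂ, ContDiff ℝ (⊤ : ℕ∞) φ → HasCompactSupport φ →
      (∀ x : ℝ, φ (-x) = φ x) →
      0 ≤ ∫ x : ℝ, f x * (∫ y : ℝ, φ (x - y) * (starRingEnd ℂ) (φ (-y))))
    (a p : κ → ℝ) (σ : κ ≃ κ) (ha : ∀ k, a (σ k) = a k) (hp : ∀ k, p (σ k) = - p k) :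
    0 ≤ ∑ k, ∑ l, ((a k * a l : ℝ) : ℂ) * f (p k + p l) := by
  let ρ : ℕ → ContDiffBump (0 : ℝ) := fun n =>
    ⟨1 / (n + 1 : ℝ) / 2, 1 / (n + 1 : ℝ), by positivity, half_lt_self (by positivity)⟩
  have hρ : Tendsto (fun n => (ρ n).rOut) atTop (𝓝 0) := tendsto_one_div_add_atTop_nhds_zero_nat
  let r : ℕ → ℝ → ℝ := fun n => (ρ n).normed volume
  have hrc : ∀ n, Continuous (r n) := fun n => (ρ n).continuous_normed
  have hrs : ∀ n, HasCompactSupport (r n) := fun n => (ρ n).hasCompactSupport_normed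
  have hrk : ∀ n k, HasCompactSupport (fun x => r n (x - p k)) := fun n k => by
    have h := (hrs n).comp_homeomorph (Homeomorph.addRight (-p k))
    simp only [sub_eq_add_neg]
    exact h
  -- The discrete measure `∑ k, a k • δ (p k)` mollified at scale `1 / (n + 1)`.
  let φ : ℕ → ℝ → ℝ := fun n x => ∑ k, a k * r n (x - p k)
  have hφs : ∀ n, ContDiff ℝ (⊤ : ℕ∞) (φ n) := fun n => by
    refine ContDiff.sum fun k _ => contDiff_const.mul ?_
    exact (ρ n).contDiff_normed.comp (contDiff_id.sub contDiff_const)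
  have hφc : ∀ n, HasCompactSupport (φ n) := fun n => by
    have : ∀ s : Finset κ, HasCompactSupport (fun x => ∑ k ∈ s, a k * r n (x - p k)) := by
      classical
      intro s
      induction s using Finset.induction_on with
      | empty => simp only [Finset.sum_empty]; exact HasCompactSupport.zero
      | insert k s hk ih =>
        simp_rw [Finset.sum_insert hk]
        exact HasCompactSupport.add (HasCompactSupport.mul_left (hrk n k)) ih
    exact this _
  have hφe : ∀ n x, φ n (-x) = φ n x := fun n x => by
    simp only [φ]
    rw [← Equiv.sum_comp σ]
    refine Finset.sum_congr rfl fun k _ => ?_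
    rw [ha, hp, show -x - -p k = -(x - p k) by ring]
    simp only [r]
    rw [(ρ n).normed_neg]
  -- Convolving two mollified point masses gives the mollified point mass at the sum.
  have hconv : ∀ n x, ∫ y : ℝ, φ n (x - y) * φ n y
      = ∑ k, ∑ l, (a k * a l) * ∫ y : ℝ, r n (x - (p k + p l) - y) * r n y := by
    intro n x
    have hint : ∀ k l, Integrable (fun y => r n (x - y - p k) * r n (y - p l)) := by
      intro k l
      refine Continuous.integrable_of_hasCompactSupport ?_ ((hrk n l).mul_left)
      have := hrc n
      fun_prop
    have h1 : ∀ y, φ n (x - y) * φ n y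
        = ∑ k, ∑ l, (a k * a l) * (r n (x - y - p k) * r n (y - p l)) := by
      intro y
      simp only [φ, Finset.sum_mul_sum]
      exact Finset.sum_congr rfl fun k _ => Finset.sum_congr rfl fun l _ => by ring
    simp_rw [h1]
    rw [integral_finsetSum _ fun k _ => integrable_finsetSum _ fun l _ => (hint k l).const_mul _]
    refine Finset.sum_congr rfl fun k _ => ?_
    rw [integral_finsetSum _ fun l _ => (hint k l).const_mul _]
    refine Finset.sum_congr rfl fun l _ => ?_
    rw [integral_const_mul, ← integral_add_right_eq_self _ (p l)]
    congr 1
    refine integral_congr_ae (.of_forall fun y => ?_)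
    simp only [add_sub_cancel_right]
    congr 2
    ring
  have hψc : ∀ n (q : ℝ), Continuous fun x => ∫ y : ℝ, r n (x - q - y) * r n y := by
    intro n q
    have h := (hrs n).continuous_convolution_right (ContinuousLinearMap.lsmul ℝ ℝ) (μ := volume)
      ((hrc n).locallyIntegrable) (hrc n)
    have h2 := h.comp (continuous_sub_right q)
    convert h2 using 2 with x
    simp only [Function.comp, convolution_def, ContinuousLinearMap.lsmul_apply, smul_eq_mul]
    exact integral_congr_ae (.of_forall fun y => mul_comm _ _)
  have hψs : ∀ n (q : ℝ), HasCompactSupport fun x => ∫ y : ℝ, r n (x - q - y) * r n y := by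
    intro n q
    have h := (hrs n).convolution (ContinuousLinearMap.lsmul ℝ ℝ) (μ := volume) (hrs n)
    have h2 := h.comp_homeomorph (Homeomorph.addRight (-q))
    have h3 : (fun x => ∫ y : ℝ, r n (x - q - y) * r n y)
        = (r n ⋆[ContinuousLinearMap.lsmul ℝ ℝ, volume] r n) ∘ Homeomorph.addRight (-q) := by
      funext x
      rw [Function.comp_apply, convolution_def]
      refine integral_congr_ae (.of_forall fun y => ?_)
      simp [mul_comm, sub_eq_add_neg]
    rw [h3]
    exact h2
  have hval : ∀ n, ∫ x : ℝ, f x * (∫ y : ℝ, (φ n (x - y) : ℂ) * (starRingEnd ℂ) (φ n (-y) : ℂ))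
      = ∑ k, ∑ l, ((a k * a l : ℝ) : ℂ) *
        ∫ x : ℝ, f x * ((∫ y : ℝ, r n (x - (p k + p l) - y) * r n y : ℝ) : ℂ) := by
    intro n
    have hint : ∀ k l, Integrable (fun x => f x *
        ((∫ y : ℝ, r n (x - (p k + p l) - y) * r n y : ℝ) : ℂ)) := by
      intro k l
      refine Continuous.integrable_of_hasCompactSupport
        (hf_cont.mul (Complex.continuous_ofReal.comp (hψc n _))) (HasCompactSupport.mul_left ?_)
      exact (hψs n _).comp_left (g := Complex.ofReal) rfl
    have h1 : ∀ x, f x * (∫ y : ℝ, (φ n (x - y) : ℂ) * (starRingEnd ℂ) (φ n (-y) : ℂ))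
        = ∑ k, ∑ l, ((a k * a l : ℝ) : ℂ) *
          (f x * ((∫ y : ℝ, r n (x - (p k + p l) - y) * r n y : ℝ) : ℂ)) := by
      intro x
      have : (∫ y : ℝ, (φ n (x - y) : ℂ) * (starRingEnd ℂ) (φ n (-y) : ℂ))
          = ((∫ y : ℝ, φ n (x - y) * φ n y : ℝ) : ℂ) := by
        rw [← integral_complex_ofReal]
        refine integral_congr_ae (.of_forall fun y => ?_)
        simp [hφe]
      rw [this, hconv]
      push_cast
      simp_rw [Finset.mul_sum]
      exact Finset.sum_congr rfl fun k _ => Finset.sum_congr rfl fun l _ => by ring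
    simp_rw [h1]
    rw [integral_finsetSum _ fun k _ => integrable_finsetSum _ fun l _ => (hint k l).const_mul _]
    refine Finset.sum_congr rfl fun k _ => ?_
    rw [integral_finsetSum _ fun l _ => (hint k l).const_mul _]
    exact Finset.sum_congr rfl fun l _ => integral_const_mul _ _
  refine ge_of_tendsto' (f := fun n : ℕ => ∑ k, ∑ l, ((a k * a l : ℝ) : ℂ) *
        ∫ x : ℝ, f x * ((∫ y : ℝ, r n (x - (p k + p l) - y) * r n y : ℝ) : ℂ)) (x := atTop) ?_ ?_
  · refine tendsto_finsetSum _ fun k _ => tendsto_finsetSum _ fun l _ => ?_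
    exact (tendsto_integral_mul_bump_convolution f hf_cont ρ hρ (p k + p l)).const_mul _
  · intro n
    rw [← hval]
    refine hf_pd (fun x => (φ n x : ℂ)) (Complex.ofRealCLM.contDiff.comp (hφs n))
      ((hφc n).comp_left (g := Complex.ofReal) rfl) fun x => by rw [hφe]

/-- The pairing of `f` with `ν ∗ ν`, where `ν = ∑ i, c i • (δ (x i) + δ (- x i))`, is nonnegative. -/
lemma kernel_nonneg {ι : Type*} [Fintype ι]
    (f : ℝ → ℂ) (hf_cont : Continuous f) (hf_even : ∀ x : ℝ, f (-x) = f x)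
    (hf_pd : ∀ φ : ℝ → ℂ, ContDiff ℝ (⊤ : ℕ∞) φ → HasCompactSupport φ →
      (∀ x : ℝ, φ (-x) = φ x) →
      0 ≤ ∫ x : ℝ, f x * (∫ y : ℝ, φ (x - y) * (starRingEnd ℂ) (φ (-y))))
    (c x : ι → ℝ) :
    0 ≤ ∑ i, ∑ j, ((c i * c j : ℝ) : ℂ) * (f (x i + x j) + f (x i - x j)) := by
  have h := sum_nonneg_of_symmetric (κ := ι ⊕ ι) f hf_cont hf_pd (Sum.elim c c)
    (Sum.elim x (-x)) (Equiv.sumComm ι ι) (by rintro (k | k) <;> simp) (by rintro (k | k) <;> simp)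
  simp only [Fintype.sum_sum_type, Sum.elim_inl, Sum.elim_inr, Pi.neg_apply,
    ← Finset.sum_add_distrib] at h
  have h2 : (0 : ℂ) ≤ 2 * ∑ i, ∑ j, ((c i * c j : ℝ) : ℂ) * (f (x i + x j) + f (x i - x j)) := by
    refine h.trans_eq ?_
    simp_rw [Finset.mul_sum]
    refine Finset.sum_congr rfl fun i _ => Finset.sum_congr rfl fun j _ => ?_
    rw [← hf_even (-x i + x j), ← hf_even (-x i + -x j), show -(-x i + x j) = x i - x j by ring,
      show -(-x i + -x j) = x i + x j by ring, ← sub_eq_add_neg]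
    ring
  have h3 := mul_nonneg (show (0 : ℂ) ≤ 1 / 2 by norm_num [Complex.le_def]) h2
  rwa [← mul_assoc, show (1 / 2 : ℂ) * 2 = 1 by norm_num, one_mul] at h3

/-- An evenly positive definite function is real-valued: the kernel at a single point `x` shows that
`f (2 * x) + f 0` is real. Hence only real sums have to be considered afterwards. -/
lemma exists_real_kernel (f : ℝ → ℂ) (hf_cont : Continuous f) (hf_even : ∀ x : ℝ, f (-x) = f x)
    (hf_pd : ∀ φ : ℝ → ℂ, ContDiff ℝ (⊤ : ℕ∞) φ → HasCompactSupport φ →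
      (∀ x : ℝ, φ (-x) = φ x) →
      0 ≤ ∫ x : ℝ, f x * (∫ y : ℝ, φ (x - y) * (starRingEnd ℂ) (φ (-y)))) :
    ∃ g : ℝ → ℝ, (∀ x, f x = g x) ∧ Continuous g ∧ (∀ x, g (-x) = g x) ∧
      ∀ (n : ℕ) (c x : Fin n → ℝ),
        0 ≤ ∑ i, ∑ j, c i * c j * (g (x i + x j) + g (x i - x j)) := by
  have hk := fun n c x => kernel_nonneg (ι := Fin n) f hf_cont hf_even hf_pd c x
  have him : ∀ x, (f x).im = 0 := by
    have h1 : ∀ x, (f (x + x)).im + (f 0).im = 0 := by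
      intro x
      have := (Complex.le_def.1 (hk 1 (fun _ => 1) (fun _ => x))).2
      simpa using this.symm
    have h0 : (f 0).im = 0 := by
      have := h1 0
      simp only [add_zero] at this
      linarith
    intro x
    have := h1 (x / 2)
    rw [add_halves, h0, add_zero] at this
    exact this
  have hre : ∀ x, f x = ((f x).re : ℂ) := fun x => Complex.ext (by simp) (by simp [him])
  refine ⟨fun x => (f x).re, hre, Complex.continuous_re.comp hf_cont, fun x => by simp [hf_even],
    fun n c x => ?_⟩
  have := (Complex.le_def.1 (hk n c x)).1
  simp only [Complex.zero_re, Complex.re_sum, Complex.re_ofReal_mul, Complex.add_re] at this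
  exact this

/-! ### Chebyshev moments on a grid -/

open Polynomial.Chebyshev in
/-- Let the vectors `x 0, …, x N` have Gram matrix `(G (i + j) + G (i - j)) / 2`. The averaged shift
`x i ↦ (x (i + 1) + x |i - 1|) / 2`, compressed to the span of `x 0, …, x (N - 1)`, is symmetric, and
diagonalising it expresses `G` through Chebyshev polynomials at the eigenvalues. -/
lemma exists_chebyshev_repr_of_gram {E : Type*} [NormedAddCommGroup E] [InnerProductSpace ℝ E]
    [FiniteDimensional ℝ E] (N : ℕ) (x : ℕ → E) (G : ℤ → ℝ) (hG : ∀ n, G (-n) = G n)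
    (hx : ∀ i j : ℕ, i ≤ N → j ≤ N →
      inner ℝ (x i) (x j) = (G (i + j) + G (i - j)) / 2) :
    ∃ (m : ℕ) (w t : Fin m → ℝ), (∀ k, 0 ≤ w k) ∧
      ∀ n : ℕ, n < N → G n = ∑ k, w k * (T ℝ n).eval (t k) := by
  -- `y i` is the averaged shift of `x i`; the index is reflected at `0`, so that `y 0 = x 1`.
  let y : ℕ → E := fun i => (1 / 2 : ℝ) • (x (i + 1) + x (i - 1 : ℤ).natAbs)
  have hyx : ∀ i j : ℕ, i < N → j < N → inner ℝ (y i) (x j)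
      = (G (i + 1 + j) + G (i + 1 - j) + G (i - 1 + j) + G (i - 1 - j)) / 4 := by
    intro i j hi hj
    have h2 : inner ℝ (x (i - 1 : ℤ).natAbs) (x j) = (G (i - 1 + j) + G (i - 1 - j)) / 2 := by
      rw [hx _ _ (by omega) hj.le]
      rcases i with _ | i
      · rw [← hG (((0 : ℕ) : ℤ) - 1 + j), ← hG (((0 : ℕ) : ℤ) - 1 - j)]
        simp only [Nat.cast_zero, zero_sub, Int.natAbs_neg, Int.natAbs_one, Nat.cast_one]
        rw [show (-(-1 + (j : ℤ))) = 1 - j by ring, show (-(-1 - (j : ℤ))) = 1 + j by ring]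
        ring
      · simp
    simp only [y]
    rw [real_inner_smul_left, inner_add_left, hx _ _ (by omega) hj.le, h2]
    push_cast
    ring
  have hsym : ∀ i j : ℕ, i < N → j < N → inner ℝ (y i) (x j) = inner ℝ (x i) (y j) := by
    intro i j hi hj
    rw [hyx i j hi hj, real_inner_comm, hyx j i hj hi]
    rw [← hG (j + 1 - i), ← hG (j - 1 - i), show (-((j : ℤ) + 1 - i)) = i - 1 - j by ring,
      show (-((j : ℤ) - 1 - i)) = i + 1 - j by ring, show (j : ℤ) + 1 + i = i + 1 + j by ring,
      show (j : ℤ) - 1 + i = i - 1 + j by ring]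
    ring
  let V : (Fin N → ℝ) →ₗ[ℝ] E := Fintype.linearCombination ℝ fun i : Fin N => x i
  let S : (Fin N → ℝ) →ₗ[ℝ] E := Fintype.linearCombination ℝ fun i : Fin N => y i
  have hVS : ∀ c d, inner ℝ (S c) (V d) = inner ℝ (V c) (S d) := by
    intro c d
    simp only [V, S, Fintype.linearCombination_apply, sum_inner, inner_sum, real_inner_smul_left,
      real_inner_smul_right]
    refine Finset.sum_congr rfl fun i _ => Finset.sum_congr rfl fun j _ => ?_
    rw [hsym _ _ j.2 i.2]
  obtain ⟨R, hR⟩ := V.rangeRestrict.exists_rightInverse_of_surjective V.range_rangeRestrict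
  have hVR : ∀ v : V.range, V (R v) = v := fun v =>
    congrArg Subtype.val (LinearMap.congr_fun hR v)
  -- The shift need not be well defined on the span of the `x i`, since these may be linearly
  -- dependent. A linear section `R` of `V` repairs this; by `hVS` the compression to the span does
  -- not depend on the section.
  let A : V.range →ₗ[ℝ] V.range := (V.range.orthogonalProjectionOnto : E →ₗ[ℝ] V.range) ∘ₗ S ∘ₗ R
  have hA : ∀ v w : V.range, inner ℝ (A v) w = inner ℝ (S (R v)) (w : E) := by
    intro v w
    simp only [A, LinearMap.comp_apply, ContinuousLinearMap.coe_coe, Submodule.coe_inner,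
      Submodule.coe_orthogonalProjectionOnto_apply]
    rw [Submodule.inner_starProjection_left_eq_right, Submodule.starProjection_eq_self_iff.2 w.2]
  have hAsym : A.IsSymmetric := by
    intro v w
    rw [hA, ← hVR w, hVS, hVR, ← real_inner_comm (v : E), ← hA w v, real_inner_comm]
  have hAx : ∀ i : ℕ, i < N → ∀ v w : V.range, (v : E) = x i →
      inner ℝ (A v) w = inner ℝ (y i) (w : E) := by
    intro i hi v w hv
    have hVi : V (Pi.single (⟨i, hi⟩ : Fin N) 1) = x i := by simp [V]
    have hSi : S (Pi.single (⟨i, hi⟩ : Fin N) 1) = y i := by simp [S]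
    rw [hA, ← hVR w, hVS, hVR, hv, ← hVi, ← hVS, hSi]
  have hxm : ∀ i : ℕ, i < N → x i ∈ V.range := fun i hi =>
    ⟨Pi.single (⟨i, hi⟩ : Fin N) 1, by simp [V]⟩
  let b := hAsym.eigenvectorBasis rfl
  let t := hAsym.eigenvalues rfl
  have hrec : ∀ k (n : ℕ), n < N → t k * inner ℝ (b k : E) (x n)
      = (inner ℝ (b k : E) (x (n + 1)) + inner ℝ (b k : E) (x (n - 1 : ℤ).natAbs)) / 2 := by
    intro k n hn
    have h1 : inner ℝ (A (b k)) (⟨x n, hxm n hn⟩ : V.range) = t k * inner ℝ (b k : E) (x n) := by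
      simp only [b, hAsym.apply_eigenvectorBasis]
      rw [Submodule.coe_inner, Submodule.coe_smul, inner_smul_left]
      simp [t]
    rw [← h1, hAsym, real_inner_comm, hAx n hn _ _ rfl, real_inner_comm]
    simp only [y, real_inner_smul_right, inner_add_right]
    ring
  -- Coordinates in an eigenbasis satisfy the three-term recurrence of the Chebyshev polynomials.
  have hT : ∀ k (n : ℕ), n < N →
      inner ℝ (b k : E) (x n) = (T ℝ n).eval (t k) * inner ℝ (b k : E) (x 0) := by
    intro k n
    induction n using Nat.twoStepInduction with
    | zero => simp
    | one =>
      intro h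
      have := hrec k 0 (by omega)
      simp at this
      simp [this]
    | more n ih1 ih2 =>
      intro h
      have h3 := hrec k (n + 1) (by omega)
      have h4 : (((n + 1 : ℕ) : ℤ) - 1).natAbs = n := by omega
      rw [h4, ih1 (by omega), ih2 (by omega)] at h3
      have h5 := T_add_two ℝ (n : ℤ)
      push_cast at h3 ⊢
      rw [h5]
      simp only [Polynomial.eval_sub, Polynomial.eval_mul, Polynomial.eval_X,
        Polynomial.eval_ofNat]
      rw [show n + 1 + 1 = n + 2 from rfl] at h3
      linear_combination -2 * h3
  refine ⟨_, fun k => inner ℝ (b k : E) (x 0) ^ 2, t, fun k => sq_nonneg _, fun n hn => ?_⟩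
  have h1 : G n = inner ℝ (x n) (x 0) := by
    rw [hx n 0 hn.le (by omega)]
    simp
  have h2 := b.sum_inner_mul_inner (⟨x n, hxm n hn⟩ : V.range)
    (⟨x 0, hxm 0 (by omega)⟩ : V.range)
  simp only [Submodule.coe_inner] at h2
  rw [h1, ← h2]
  refine Finset.sum_congr rfl fun k _ => ?_
  rw [real_inner_comm, hT k n hn]
  ring

open Polynomial.Chebyshev in
/-- Truncated moment problem for Chebyshev polynomials, with nodes anywhere on the real line. -/
lemma exists_chebyshev_repr (N : ℕ) (G : ℤ → ℝ) (hG : ∀ n, G (-n) = G n)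
    (hpos : ∀ c : Fin (N + 1) → ℝ, 0 ≤ ∑ i, ∑ j, c i * c j *
      (G ((i : ℕ) + (j : ℕ)) + G ((i : ℕ) - (j : ℕ)))) :
    ∃ (m : ℕ) (w t : Fin m → ℝ), (∀ k, 0 ≤ w k) ∧
      ∀ n : ℕ, n < N → G n = ∑ k, w k * (T ℝ n).eval (t k) := by
  let M : Matrix (Fin (N + 1)) (Fin (N + 1)) ℝ := Matrix.of fun i j =>
    (G ((i : ℕ) + (j : ℕ)) + G ((i : ℕ) - (j : ℕ))) / 2
  have hM : M.PosSemidef := by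
    refine Matrix.PosSemidef.of_dotProduct_mulVec_nonneg ?_ fun c => ?_
    · refine Matrix.IsHermitian.ext fun i j => ?_
      simp only [M, Matrix.of_apply, star_trivial]
      rw [← hG ((j : ℕ) - (i : ℕ)), neg_sub, add_comm ((j : ℕ) : ℤ)]
    · have := hpos c
      simp only [dotProduct, Matrix.mulVec, M, Matrix.of_apply, Finset.mul_sum, star_trivial,
        Pi.star_apply]
      have h2 := div_nonneg this (zero_le_two)
      simp only [Finset.sum_div] at h2
      refine h2.trans_eq (Finset.sum_congr rfl fun i _ => Finset.sum_congr rfl fun j _ => ?_)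
      ring
  obtain ⟨m, v, hv⟩ := Matrix.posSemidef_iff_eq_sum_vecMulVec.1 hM
  refine exists_chebyshev_repr_of_gram (E := EuclideanSpace ℝ (Fin m)) N
    (fun i => WithLp.toLp 2 fun k => if h : i < N + 1 then v k ⟨i, h⟩ else 0) G hG
    fun i j hi hj => ?_
  have h := congrFun (congrFun hv ⟨i, by omega⟩) ⟨j, by omega⟩
  simp only [M, Matrix.of_apply, Matrix.sum_apply, Matrix.vecMulVec_apply, star_trivial] at h
  rw [h]
  simp [PiLp.inner_apply, Nat.lt_succ_of_le hi, Nat.lt_succ_of_le hj, mul_comm]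

/-- The bounded and unbounded real even characters of `ℝ`, joined into one family over a real
parameter: `x ↦ cos (u * x)` for `0 ≤ u` and `x ↦ cosh (u * x)` for `u ≤ 0`. The formula is a product
one of whose factors is always `1`, which makes joint continuity evident. -/
noncomputable def evenChar (u x : ℝ) : ℝ := Real.cos (max u 0 * x) * Real.cosh (max (-u) 0 * x)

open Polynomial.Chebyshev in
/-- On even indices the Chebyshev polynomials at any real node are an even character sampled on the
grid `h * ℕ`. Nodes `t < -1` cause no trouble, since `T (2 * n)` is an even polynomial. -/
lemma exists_chebyshev_param (t h : ℝ) (hh : 0 < h) : ∃ u : ℝ, u ≤ Real.pi / h ∧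
    ∀ n : ℕ, (T ℝ (2 * n : ℕ)).eval t = evenChar u (n * h) := by
  have habs : ∀ n : ℕ, (T ℝ (2 * n : ℕ)).eval t = (T ℝ (2 * n : ℕ)).eval |t| := by
    intro n
    rcases abs_choice t with h | h
    · rw [h]
    · rw [h, T_eval_neg]
      simp
  rcases le_total |t| 1 with ht | ht
  · have h0 : 0 ≤ Real.arccos |t| := Real.arccos_nonneg _
    refine ⟨2 * Real.arccos |t| / h, ?_, fun n => ?_⟩
    · have := Real.arccos_le_pi_div_two.2 (abs_nonneg t)
      gcongr
      linarith
    · have hu : 0 ≤ 2 * Real.arccos |t| / h := by positivity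
      rw [habs, evenChar, max_eq_left hu, max_eq_right (by linarith)]
      conv_lhs => rw [← Real.cos_arccos (by linarith [abs_nonneg t]) ht, T_real_cos]
      simp only [zero_mul, Real.cosh_zero, mul_one]
      congr 1
      push_cast
      field_simp
  · have h0 : 0 ≤ Real.arcosh |t| := Real.arcosh_nonneg ht
    have hu : 0 ≤ 2 * Real.arcosh |t| / h := by positivity
    refine ⟨-(2 * Real.arcosh |t| / h), ?_, fun n => ?_⟩
    · exact (neg_nonpos.2 hu).trans (by positivity)
    · rw [habs, evenChar, max_eq_right (by linarith), neg_neg, max_eq_left hu]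
      conv_lhs => rw [← Real.cosh_arcosh ht, T_real_cosh]
      simp only [zero_mul, Real.cos_zero, one_mul]
      congr 1
      push_cast
      field_simp

/-- On a finite grid `g` is a positive combination of even characters, with frequencies at most
`π / h`. -/
lemma exists_grid_repr (g : ℝ → ℝ) (hge : ∀ x, g (-x) = g x)
    (hpos : ∀ (n : ℕ) (c x : Fin n → ℝ),
        0 ≤ ∑ i, ∑ j, c i * c j * (g (x i + x j) + g (x i - x j)))
    (h : ℝ) (hh : 0 < h) (N : ℕ) :
    ∃ (m : ℕ) (w u : Fin m → ℝ), (∀ k, 0 ≤ w k) ∧ (∀ k, u k ≤ Real.pi / h) ∧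
      ∀ n : ℕ, n ≤ N → g (n * h) = ∑ k, w k * evenChar (u k) (n * h) := by
  -- Sampling at the half step `h / 2` and keeping the even indices leaves only Chebyshev polynomials
  -- of even degree.
  obtain ⟨m, w, t, hw, hG⟩ := exists_chebyshev_repr (2 * N + 1) (fun n => g (n * (h / 2)))
    (fun n => by simp only [Int.cast_neg, neg_mul, hge]) (fun c => by
      refine (hpos _ c fun i => (i : ℕ) * (h / 2)).trans_eq ?_
      refine Finset.sum_congr rfl fun i _ => Finset.sum_congr rfl fun j _ => ?_
      push_cast
      rw [add_mul, sub_mul])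
  choose u hu huT using fun k => exists_chebyshev_param (t k) h hh
  refine ⟨m, w, u, hw, hu, fun n hn => ?_⟩
  have := hG (2 * n) (by omega)
  simp_rw [huT] at this
  rw [← this]
  congr 1
  push_cast
  ring

/-! ### Growth and tail estimates -/

@[simp] lemma evenChar_zero (u : ℝ) : evenChar u 0 = 1 := by simp [evenChar]

lemma evenChar_of_nonneg {u : ℝ} (hu : 0 ≤ u) (x : ℝ) : evenChar u x = Real.cos (u * x) := by
  simp [evenChar, max_eq_left hu, max_eq_right (neg_nonpos.2 hu)]

lemma evenChar_of_nonpos {u : ℝ} (hu : u ≤ 0) (x : ℝ) : evenChar u x = Real.cosh (u * x) := by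
  simp [evenChar, max_eq_right hu, max_eq_left (neg_nonneg.2 hu)]

lemma evenChar_neg (u x : ℝ) : evenChar u (-x) = evenChar u x := by
  simp [evenChar]

lemma continuous_evenChar : Continuous fun p : ℝ × ℝ => evenChar p.1 p.2 := by
  unfold evenChar; fun_prop

/-- The least upper bound for `|evenChar u|` on `[-p, p]`: it is `1` for `0 ≤ u` and `cosh (p * u)`
for `u ≤ 0`. -/
noncomputable def weight (p u : ℝ) : ℝ := Real.cosh (max (-u) 0 * p)

lemma continuous_weight (p : ℝ) : Continuous (weight p) := by
  unfold weight; fun_prop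

lemma weight_pos (p u : ℝ) : 0 < weight p u := Real.cosh_pos _

lemma weight_mono {p q : ℝ} (hp : |p| ≤ q) (u : ℝ) : weight p u ≤ weight q u := by
  unfold weight
  rw [Real.cosh_le_cosh, abs_mul, abs_mul]
  exact mul_le_mul_of_nonneg_left (hp.trans (le_abs_self q)) (abs_nonneg _)

lemma abs_evenChar_le (u x : ℝ) : |evenChar u x| ≤ weight x u := by
  rw [evenChar, abs_mul, abs_of_pos (Real.cosh_pos _)]
  exact mul_le_of_le_one_left (Real.cosh_pos _).le (Real.abs_cos_le_one _)

/-- The weight is dominated by the character itself, so the values of `g` control the exponential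
moments of any representing measure. -/
lemma weight_le_evenChar_add_two (u x : ℝ) : weight x u ≤ evenChar u x + 2 := by
  rcases le_total 0 u with hu | hu
  · rw [evenChar_of_nonneg hu, weight, max_eq_right (neg_nonpos.2 hu)]
    simp only [zero_mul, Real.cosh_zero]
    linarith [Real.neg_one_le_cos (u * x)]
  · rw [evenChar_of_nonpos hu, weight, max_eq_left (neg_nonneg.2 hu), neg_mul, Real.cosh_neg]
    linarith

/-- By convexity of `exp` along `[0, y]` and `[0, -y]`. -/
lemma cosh_mul_le {s y : ℝ} (hs0 : 0 ≤ s) (hs1 : s ≤ 1) :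
    Real.cosh (y * s) ≤ 1 + s * Real.cosh y := by
  have h1 : Real.cosh (y * s) ≤ s * Real.cosh y + (1 - s) * 1 := by
    have e1 := convexOn_exp.2 (Set.mem_univ y) (Set.mem_univ 0) hs0 (sub_nonneg.2 hs1) (by ring)
    have e2 := convexOn_exp.2 (Set.mem_univ (-y)) (Set.mem_univ 0) hs0 (sub_nonneg.2 hs1) (by ring)
    simp only [smul_eq_mul, mul_zero, add_zero, Real.exp_zero] at e1 e2
    rw [Real.cosh_eq, Real.cosh_eq, show -(y * s) = s * -y by ring, mul_comm y s]
    linarith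
  linarith

/-- A Dirichlet kernel bound, by telescoping after multiplication with `2 * sin (θ / 2)`. -/
lemma sum_cos_le {θ : ℝ} (h0 : 0 < θ) (h1 : θ ≤ Real.pi) (N : ℕ) :
    ∑ n ∈ Finset.range N, Real.cos (n * θ) ≤ Real.pi / θ := by
  have hs : θ / Real.pi ≤ Real.sin (θ / 2) := by
    refine le_trans (le_of_eq ?_) (Real.mul_le_sin (by linarith) (by linarith))
    ring
  have hsp : 0 < θ / Real.pi := div_pos h0 Real.pi_pos
  have htel : ∀ N : ℕ, 2 * Real.sin (θ / 2) * ∑ n ∈ Finset.range N, Real.cos (n * θ)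
      = Real.sin ((N - 1 / 2) * θ) + Real.sin (θ / 2) := by
    intro N
    induction N with
    | zero =>
      rw [show ((0 : ℕ) - 1 / 2 : ℝ) * θ = -(θ / 2) by push_cast; ring, Real.sin_neg]
      simp
    | succ N ih =>
      rw [Finset.sum_range_succ, mul_add, ih]
      rw [show ((N : ℝ) - 1 / 2) * θ = N * θ - θ / 2 by ring,
        show (((N + 1 : ℕ) : ℝ) - 1 / 2) * θ = N * θ + θ / 2 by push_cast; ring,
        Real.sin_sub, Real.sin_add]
      ring
  have h2 : Real.sin (θ / 2) * ∑ n ∈ Finset.range N, Real.cos (n * θ) ≤ 1 := by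
    have := htel N
    have h3 := Real.sin_le_one ((N - 1 / 2) * θ)
    have h4 := Real.sin_le_one (θ / 2)
    nlinarith
  rw [← inv_div]
  by_contra! hcon
  have h5 : 0 < (θ / Real.pi)⁻¹ := inv_pos.2 hsp
  have h6 : 1 < θ / Real.pi * ∑ n ∈ Finset.range N, Real.cos (n * θ) := by
    rw [← mul_inv_cancel₀ hsp.ne']
    exact mul_lt_mul_of_pos_left hcon hsp
  have h7 := mul_le_mul_of_nonneg_right hs (h5.trans hcon).le
  linarith

/-- A discrete form of Lévy's tightness estimate. Averaging `1 - cos (u * n * h)` over the grid points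
of `[0, δ]` gives at least `1 / 2` for frequencies `u` beyond `4 * π / δ`, while the average of
`g 0 - g` is at most `η`. The hyperbolic part contributes with the wrong sign, but only `δ * B`. -/
lemma sum_weight_upper_tail_le {m : ℕ} {w u : Fin m → ℝ} {h δ η B : ℝ} {g : ℝ → ℝ}
    (hw : ∀ k, 0 ≤ w k) (hh : 0 < h) (hu : ∀ k, u k ≤ Real.pi / h)
    (hδ0 : 0 < δ) (hδ1 : δ ≤ 1) (hη : ∀ x, 0 ≤ x → x ≤ δ → g 0 - g x ≤ η) (hη0 : 0 ≤ η)
    (hB : ∑ k, w k * weight 1 (u k) ≤ B)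
    (hg : ∀ n : ℕ, n * h ≤ δ → g (n * h) = ∑ k, w k * evenChar (u k) (n * h)) :
    ∑ k, w k * (if 4 * Real.pi / δ < u k then 1 else 0) ≤ 2 * (η + δ * B) := by
  have hB0 : 0 ≤ B := le_trans
    (Finset.sum_nonneg fun k _ => mul_nonneg (hw k) (weight_pos _ _).le) hB
  rcases le_or_gt δ h with hδh | hδh
  -- For `δ ≤ h` the frequency cap `π / h` already lies below `4 * π / δ`.
  · refine le_trans (Finset.sum_nonpos fun k _ => ?_) (by positivity)
    rw [if_neg, mul_zero]
    rw [not_lt]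
    refine (hu k).trans ?_
    have := Real.pi_pos
    calc Real.pi / h ≤ Real.pi / δ := by gcongr
      _ ≤ 4 * Real.pi / δ := by gcongr; linarith
  · set N := ⌊δ / h⌋₊ with hN
    have hN1 : N * h ≤ δ := by
      have := Nat.floor_le (div_nonneg hδ0.le hh.le)
      rwa [← hN, le_div_iff₀ hh] at this
    have hN2 : δ ≤ 2 * (N * h) := by
      have h1 : 1 ≤ N := Nat.le_floor (by rw [Nat.cast_one, le_div_iff₀ hh]; linarith)
      have h2 := Nat.lt_floor_add_one (δ / h)
      rw [← hN, div_lt_iff₀ hh] at h2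
      have h3 : (1 : ℝ) ≤ N := by exact_mod_cast h1
      nlinarith
    have hNpos : (0 : ℝ) < N := by
      by_contra hcon
      have : (N : ℝ) = 0 := le_antisymm (not_lt.1 hcon) (Nat.cast_nonneg _)
      rw [this] at hN2
      linarith
    have hnδ : ∀ n ∈ Finset.range N, (n : ℝ) * h ≤ δ := fun n hn => by
      refine le_trans ?_ hN1
      gcongr
      exact (Finset.mem_range.1 hn).le
    have hP : ∀ k, N * ((if 4 * Real.pi / δ < u k then 1 else 0) / 2 - δ * weight 1 (u k))
        ≤ ∑ n ∈ Finset.range N, (1 - evenChar (u k) (n * h)) := by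
      intro k
      have hδw : 0 ≤ N * (δ * weight 1 (u k)) :=
        mul_nonneg hNpos.le (mul_nonneg hδ0.le (weight_pos _ _).le)
      split_ifs with hk
      · have huk : 0 < u k := lt_trans (div_pos (by linarith [Real.pi_pos]) hδ0) hk
        have h1 := sum_cos_le (θ := u k * h) (by positivity)
          (by rw [← le_div_iff₀ hh]; exact hu k) N
        have h2 : Real.pi / (u k * h) ≤ N / 2 := by
          rw [div_le_div_iff₀ (by positivity) two_pos]
          rw [div_lt_iff₀ hδ0] at hk
          nlinarith
        have h3 : ∑ n ∈ Finset.range N, (1 - evenChar (u k) (n * h))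
            = N - ∑ n ∈ Finset.range N, Real.cos (n * (u k * h)) := by
          rw [Finset.sum_sub_distrib]
          simp only [Finset.sum_const, Finset.card_range, nsmul_eq_mul, mul_one]
          congr 1
          refine Finset.sum_congr rfl fun n _ => ?_
          rw [evenChar_of_nonneg huk.le]
          congr 1
          ring
        rw [h3]
        linarith
      · have h1 : ∀ n ∈ Finset.range N, -(δ * weight 1 (u k)) ≤ 1 - evenChar (u k) (n * h) := by
          intro n hn
          have h2 := hnδ n hn
          rcases le_total 0 (u k) with huk | huk
          · rw [evenChar_of_nonneg huk]
            have := Real.cos_le_one (u k * (n * h))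
            have h3 := mul_nonneg hδ0.le (weight_pos 1 (u k)).le
            linarith
          · rw [evenChar_of_nonpos huk]
            have h3 := cosh_mul_le (y := u k) (s := n * h) (by positivity) (h2.trans hδ1)
            have h4 : weight 1 (u k) = Real.cosh (u k) := by
              rw [weight, max_eq_left (neg_nonneg.2 huk), mul_one, Real.cosh_neg]
            rw [h4]
            have := mul_le_mul_of_nonneg_right h2 (Real.cosh_pos (u k)).le
            linarith
        have h5 := Finset.card_nsmul_le_sum _ _ _ h1
        rw [Finset.card_range, nsmul_eq_mul] at h5
        linarith
    have hsum : ∑ k, w k * ∑ n ∈ Finset.range N, (1 - evenChar (u k) (n * h)) ≤ N * η := by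
      simp_rw [Finset.mul_sum]
      rw [Finset.sum_comm]
      have h1 : ∀ n ∈ Finset.range N, ∑ k, w k * (1 - evenChar (u k) (n * h)) ≤ η := by
        intro n hn
        have h0 := hg 0 (by simpa using hδ0.le)
        simp only [Nat.cast_zero, zero_mul, evenChar_zero, mul_one] at h0
        have h2 := hη (n * h) (by positivity) (hnδ n hn)
        rw [hg n (hnδ n hn), h0, ← Finset.sum_sub_distrib] at h2
        simpa [mul_sub] using h2
      have h2 := Finset.sum_le_card_nsmul _ _ _ h1
      rwa [Finset.card_range, nsmul_eq_mul] at h2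
    have hle := (Finset.sum_le_sum fun k (_ : k ∈ Finset.univ) =>
      mul_le_mul_of_nonneg_left (hP k) (hw k)).trans hsum
    have heq : ∑ k, w k * (N * ((if 4 * Real.pi / δ < u k then 1 else 0) / 2
        - δ * weight 1 (u k)))
        = N * ((∑ k, w k * (if 4 * Real.pi / δ < u k then 1 else 0)) / 2
          - δ * ∑ k, w k * weight 1 (u k)) := by
      rw [Finset.mul_sum, Finset.sum_div, ← Finset.sum_sub_distrib, Finset.mul_sum]
      exact Finset.sum_congr rfl fun k _ => by ring
    rw [heq] at hle
    have h3 := le_of_mul_le_mul_left hle hNpos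
    have h4 := mul_le_mul_of_nonneg_left hB hδ0.le
    linarith

lemma sum_weight_lower_tail_le {m : ℕ} {w u : Fin m → ℝ} {B R : ℝ} (hR : 0 < R)
    (hw : ∀ k, 0 ≤ w k) (hB : ∑ k, w k * weight 1 (u k) ≤ B) :
    ∑ k, w k * (if u k < -R then 1 else 0) ≤ B / R := by
  rw [le_div_iff₀ hR, Finset.sum_mul]
  refine le_trans (Finset.sum_le_sum fun k _ => ?_) hB
  rw [mul_assoc]
  refine mul_le_mul_of_nonneg_left ?_ (hw k)
  split_ifs with hk
  · rw [one_mul, weight, mul_one, max_eq_left (by linarith), Real.cosh_neg]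
    have := Real.one_le_cosh (u k)
    have h2 := Real.add_one_le_exp (-u k)
    have h3 := Real.exp_pos (u k)
    have h4 := Real.cosh_eq (u k)
    have h5 := Real.quadratic_le_exp_of_nonneg (x := -u k) (by linarith)
    nlinarith [sq_nonneg (u k + 2)]
  · rw [zero_mul]
    exact (weight_pos _ _).le

/-! ### A tight sequence of discrete measures -/

/-- Discrete probability measures which represent `g` on the grids `(1 / k!) * ℕ`, up to `k + 1`. The
factorials make every nonnegative rational a grid point for all large `k`. -/
lemma exists_measure_seq (g : ℝ → ℝ) (hgc : Continuous g) (hge : ∀ x, g (-x) = g x)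
    (hg0 : g 0 = 1)
    (hpos : ∀ (n : ℕ) (c x : Fin n → ℝ),
        0 ≤ ∑ i, ∑ j, c i * c j * (g (x i + x j) + g (x i - x j))) :
    ∃ ν : ℕ → ProbabilityMeasure ℝ,
      IsTightMeasureSet (Set.range fun k => (ν k : Measure ℝ)) ∧
      (∀ q : ℚ, 0 ≤ q → ∀ᶠ k in atTop, ∫ u, evenChar u q ∂(ν k : Measure ℝ) = g q) ∧
      (∀ p : ℕ, ∀ᶠ k in atTop, ∫⁻ u, ENNReal.ofReal (weight p u) ∂(ν k : Measure ℝ)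
        ≤ ENNReal.ofReal (g p + 2)) := by
  have hfac : ∀ k : ℕ, (0 : ℝ) < (k.factorial : ℝ) := fun k => by
    exact_mod_cast k.factorial_pos
  choose m w u hw hu hgr using fun k : ℕ =>
    exists_grid_repr g hge hpos (1 / (k.factorial : ℝ)) (by have := hfac k; positivity)
      ((k + 1) * k.factorial)
  have hmass : ∀ k, ∑ i, w k i = 1 := fun k => by
    have := hgr k 0 (Nat.zero_le _)
    simpa [hg0] using this.symm
  have hgr' : ∀ (k : ℕ) (x : ℝ) (n : ℕ), n = x * k.factorial → x ≤ k + 1 →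
      g x = ∑ i, w k i * evenChar (u k i) x := by
    intro k x n hn hx
    have hx' : (n : ℝ) * (1 / (k.factorial : ℝ)) = x := by
      rw [hn]
      have := (hfac k).ne'
      field_simp
    have hnN : n ≤ (k + 1) * k.factorial := by
      have : (n : ℝ) ≤ (k + 1) * k.factorial := by
        rw [hn]
        exact mul_le_mul_of_nonneg_right hx (hfac k).le
      exact_mod_cast this
    have := hgr k n hnN
    rwa [hx'] at this
  have hwt : ∀ k (p : ℕ), p ≤ k + 1 → ∑ i, w k i * weight p (u k i) ≤ g p + 2 := by
    intro k p hp
    rw [hgr' k p (p * k.factorial) (by push_cast; ring) (by exact_mod_cast hp)]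
    calc ∑ i, w k i * weight p (u k i) ≤ ∑ i, w k i * (evenChar (u k i) p + 2) :=
          Finset.sum_le_sum fun i _ =>
            mul_le_mul_of_nonneg_left (weight_le_evenChar_add_two _ _) (hw k i)
      _ = ∑ i, w k i * evenChar (u k i) p + (∑ i, w k i) * 2 := by
          rw [Finset.sum_mul, ← Finset.sum_add_distrib]
          exact Finset.sum_congr rfl fun i _ => by ring
      _ = _ := by rw [hmass]; ring
  let ν : ℕ → Measure ℝ := fun k => ∑ i, ENNReal.ofReal (w k i) • Measure.dirac (u k i)
  have hlin : ∀ k (F : ℝ → ℝ), (∀ x, 0 ≤ F x) → ∫⁻ x, ENNReal.ofReal (F x) ∂(ν k)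
      = ENNReal.ofReal (∑ i, w k i * F (u k i)) := by
    intro k F hF
    rw [ENNReal.ofReal_sum_of_nonneg fun i _ => mul_nonneg (hw k i) (hF _)]
    simp only [ν, lintegral_finsetSum_measure, lintegral_smul_measure, lintegral_dirac,
      smul_eq_mul]
    exact Finset.sum_congr rfl fun i _ => (ENNReal.ofReal_mul (hw k i)).symm
  have hmeas : ∀ k (P : ℝ → Prop) [DecidablePred P], ν k {x | P x}
      = ENNReal.ofReal (∑ i, w k i * (if P (u k i) then 1 else 0)) := by
    intro k P _
    rw [ENNReal.ofReal_sum_of_nonneg fun i _ => mul_nonneg (hw k i) (by split_ifs <;> norm_num)]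
    simp only [ν, Measure.finsetSum_apply, Measure.smul_apply, Measure.dirac_apply, smul_eq_mul]
    refine Finset.sum_congr rfl fun i _ => ?_
    by_cases h : P (u k i) <;> simp [h]
  have hprob : ∀ k, IsProbabilityMeasure (ν k) := fun k => ⟨by
    have := hmeas k (fun _ => True)
    simpa [hmass] using this⟩
  refine ⟨fun k => ⟨ν k, hprob k⟩, ?_, ?_, ?_⟩
  · rw [isTightMeasureSet_iff_exists_isCompact_measure_compl_le]
    intro ε hε
    obtain ⟨e, he0, heε⟩ := ENNReal.lt_iff_exists_real_btwn.1 hε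
    have he : 0 < e := ENNReal.ofReal_pos.1 heε.1
    set B : ℝ := g 1 + 2 with hBdef
    have hB : ∀ k, ∑ i, w k i * weight 1 (u k i) ≤ B := fun k => by
      have := hwt k 1 (by omega)
      simpa using this
    have hB0 : 0 ≤ B := le_trans
      (Finset.sum_nonneg fun i _ => mul_nonneg (hw 0 i) (weight_pos _ _).le) (hB 0)
    obtain ⟨r, hr0, hr⟩ := Metric.continuousAt_iff.1 hgc.continuousAt (e / 8) (by linarith)
    -- `δ` is the scale on which `g` varies by at most `e / 8` and `δ * B ≤ e / 8`.
    set δ : ℝ := min (min 1 (r / 2)) (e / (8 * (B + 1))) with hδdef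
    have hδ0 : 0 < δ := by positivity
    have hδ1 : δ ≤ 1 := (min_le_left _ _).trans (min_le_left _ _)
    have hδr : δ < r := ((min_le_left _ _).trans (min_le_right _ _)).trans_lt (by linarith)
    have hδB : δ * B ≤ e / 8 := by
      calc δ * B ≤ e / (8 * (B + 1)) * (B + 1) :=
            mul_le_mul (min_le_right _ _) (by linarith) hB0 (by positivity)
        _ = e / 8 := by field_simp
    set R : ℝ := max (4 * Real.pi / δ) (2 * B / e + 1) with hRdef
    have hR0 : 0 < R := lt_of_lt_of_le (by positivity) (le_max_right _ _)
    have hBR : B / R ≤ e / 2 := by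
      rw [div_le_iff₀ hR0]
      have h1 : 2 * B / e + 1 ≤ R := le_max_right _ _
      have h2 : e / 2 * (2 * B / e + 1) = B + e / 2 := by field_simp
      nlinarith
    refine ⟨Set.Icc (-R) R, isCompact_Icc, ?_⟩
    rintro _ ⟨k, rfl⟩
    refine le_trans ?_ heε.2.le
    have hup : ν k {x | 4 * Real.pi / δ < x} ≤ ENNReal.ofReal (e / 2) := by
      rw [hmeas k]
      refine ENNReal.ofReal_le_ofReal ((sum_weight_upper_tail_le (g := g) (η := e / 8)
        (h := 1 / (k.factorial : ℝ)) (hw k) (by have := hfac k; positivity) (hu k) hδ0 hδ1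
        ?_ (by linarith) (hB k) ?_).trans (by linarith))
      · intro x hx0 hxδ
        have h1 := hr (show dist x 0 < r by
          rw [Real.dist_eq, sub_zero, abs_of_nonneg hx0]; linarith)
        rw [Real.dist_eq] at h1
        linarith [neg_abs_le (g x - g 0)]
      · intro n hn
        refine hgr' k _ n ?_ ?_
        · have := (hfac k).ne'
          field_simp
        · have : (0 : ℝ) ≤ k := k.cast_nonneg
          linarith
    have hlow : ν k {x | x < -R} ≤ ENNReal.ofReal (e / 2) := by
      rw [hmeas k]
      exact ENNReal.ofReal_le_ofReal ((sum_weight_lower_tail_le hR0 (hw k) (hB k)).trans hBR)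
    calc ν k (Set.Icc (-R) R)ᶜ ≤ ν k ({x | 4 * Real.pi / δ < x} ∪ {x | x < -R}) := by
          refine measure_mono fun x hx => ?_
          by_contra hcon
          simp only [Set.mem_union, Set.mem_ofPred_eq, not_or, not_lt] at hcon
          exact hx ⟨hcon.2, hcon.1.trans (le_max_left _ _)⟩
      _ ≤ _ := measure_union_le _ _
      _ ≤ ENNReal.ofReal (e / 2) + ENNReal.ofReal (e / 2) := add_le_add hup hlow
      _ = ENNReal.ofReal e := by
          rw [← ENNReal.ofReal_add (by linarith) (by linarith), add_halves]
  · intro q hq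
    filter_upwards [eventually_ge_atTop (max q.den ⌈q⌉₊)] with k hk
    have h1 : q.den ∣ k.factorial := Nat.dvd_factorial q.pos ((le_max_left _ _).trans hk)
    obtain ⟨d, hd⟩ := h1
    have hqk : (q : ℝ) ≤ k + 1 := by
      have : q ≤ k := (Nat.le_ceil q).trans (by exact_mod_cast (le_max_right _ _).trans hk)
      have : (q : ℝ) ≤ k := by exact_mod_cast this
      linarith
    have hn : ((q.num.toNat * d : ℕ) : ℝ) = q * k.factorial := by
      have h2 : ((q.num.toNat : ℤ) : ℝ) = q.num := by
        rw [Int.toNat_of_nonneg (Rat.num_nonneg.2 hq)]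
      have h3 : (q : ℝ) * q.den = q.num := by exact_mod_cast Rat.mul_den_eq_num q
      rw [hd]
      push_cast at h2 ⊢
      rw [h2, ← h3]
      ring
    rw [hgr' k q _ hn hqk]
    simp only [ProbabilityMeasure.coe_mk, ν]
    rw [integral_finsetSum_measure]
    · refine Finset.sum_congr rfl fun i _ => ?_
      rw [integral_smul_measure, integral_dirac, ENNReal.toReal_ofReal (hw k i), smul_eq_mul]
    · intro i _
      exact (integrable_dirac (by simp)).smul_measure ENNReal.ofReal_ne_top
  · intro p
    filter_upwards [eventually_ge_atTop p] with k hk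
    simp only [ProbabilityMeasure.coe_mk]
    rw [hlin k _ fun x => (weight_pos _ x).le]
    exact ENNReal.ofReal_le_ofReal (hwt k p (by omega))

/-! ### Passage to the weak limit -/

lemma integrable_weight {μ : Measure ℝ} {p C : ℝ}
    (h : ∫⁻ u, ENNReal.ofReal (weight p u) ∂μ ≤ ENNReal.ofReal C) : Integrable (weight p) μ := by
  refine ⟨(continuous_weight p).aestronglyMeasurable, ?_⟩
  rw [hasFiniteIntegral_iff_ofReal (Eventually.of_forall fun u => (weight_pos p u).le)]
  exact h.trans_lt ENNReal.ofReal_lt_top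

lemma integral_weight_le {μ : Measure ℝ} {p C : ℝ} (hC : 0 ≤ C)
    (h : ∫⁻ u, ENNReal.ofReal (weight p u) ∂μ ≤ ENNReal.ofReal C) : ∫ u, weight p u ∂μ ≤ C := by
  rw [integral_eq_lintegral_of_nonneg_ae (Eventually.of_forall fun u => (weight_pos p u).le)
    (continuous_weight p).aestronglyMeasurable]
  exact ENNReal.toReal_le_of_le_ofReal hC h

lemma continuous_evenChar_left (x : ℝ) : Continuous fun u => evenChar u x :=
  continuous_evenChar.comp (by fun_prop : Continuous fun u : ℝ => (u, x))

lemma integrable_evenChar {μ : Measure ℝ} {p x : ℝ} (hx : |x| ≤ p)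
    (h : Integrable (weight p) μ) : Integrable (fun u => evenChar u x) μ :=
  h.mono' (continuous_evenChar_left x).aestronglyMeasurable
    (Eventually.of_forall fun u => (abs_evenChar_le u x).trans (weight_mono hx u))

/-- Cutting the parameter off at `-M` costs at most `O(1 / M)` relative to the next weight, because
`y * cosh (y * q) ≤ 2 * cosh (y * (q + 1))` for `0 ≤ y`. -/
lemma abs_evenChar_sub_cutoff_le {M q p : ℝ} (hM : 0 < M) (hq : 0 ≤ q) (hqp : q + 1 ≤ p) (u : ℝ) :
    |evenChar u q - evenChar (max u (-M)) q| ≤ 2 / M * weight p u := by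
  have hw := weight_pos p u
  rcases le_or_gt (-M) u with hu | hu
  · rw [max_eq_left hu, sub_self, abs_zero]; positivity
  · rw [max_eq_right hu.le, evenChar_of_nonpos (by linarith), evenChar_of_nonpos (by linarith),
      weight, max_eq_left (by linarith)]
    have h1 : Real.cosh (-M * q) ≤ Real.cosh (u * q) := by
      rw [Real.cosh_le_cosh, abs_mul, abs_mul, abs_neg, abs_of_pos hM,
        abs_of_neg (show u < 0 by linarith)]
      exact mul_le_mul_of_nonneg_right (by linarith) (abs_nonneg _)
    have h0 := Real.cosh_pos (-M * q)
    rw [abs_of_nonneg (by linarith), div_mul_eq_mul_div, le_div_iff₀ hM]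
    have h2 : Real.cosh (u * q) ≤ Real.exp (-u * q) := by
      have h3 : Real.exp (u * q) ≤ Real.exp (-u * q) := Real.exp_le_exp.2 (by nlinarith)
      rw [Real.cosh_eq, ← neg_mul]
      linarith
    have h4 : M ≤ Real.exp (-u) := by linarith [Real.add_one_le_exp (-u)]
    have h5 : Real.exp (-u * q) * Real.exp (-u) ≤ Real.exp (-u * p) := by
      rw [← Real.exp_add]; exact Real.exp_le_exp.2 (by nlinarith)
    have h6 : Real.exp (-u * p) ≤ 2 * Real.cosh (-u * p) := by
      rw [Real.cosh_eq]; linarith [Real.exp_pos (-(-u * p))]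
    calc (Real.cosh (u * q) - Real.cosh (-M * q)) * M ≤ Real.cosh (u * q) * M :=
          mul_le_mul_of_nonneg_right (by linarith) hM.le
      _ ≤ Real.exp (-u * q) * Real.exp (-u) :=
          mul_le_mul h2 h4 hM.le (Real.exp_pos _).le
      _ ≤ _ := h5.trans h6

lemma abs_evenChar_cutoff_le {M : ℝ} (hM : 0 < M) (q u : ℝ) :
    |evenChar (max u (-M)) q| ≤ Real.cosh (M * q) := by
  refine (abs_evenChar_le _ _).trans ?_
  rw [weight, Real.cosh_le_cosh, abs_mul, abs_mul]
  refine mul_le_mul_of_nonneg_right ?_ (abs_nonneg _)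
  rw [abs_of_nonneg (le_max_right _ _), abs_of_pos hM]
  exact max_le (by linarith [le_max_right u (-M)]) hM.le

lemma abs_integral_sub_cutoff_le {μ : Measure ℝ} [IsFiniteMeasure μ] {M q p C : ℝ} (hM : 0 < M)
    (hq : 0 ≤ q) (hqp : q + 1 ≤ p) (hC : 0 ≤ C)
    (h : ∫⁻ u, ENNReal.ofReal (weight p u) ∂μ ≤ ENNReal.ofReal C) :
    |∫ u, evenChar u q ∂μ - ∫ u, evenChar (max u (-M)) q ∂μ| ≤ 2 / M * C := by
  have hi := integrable_weight h
  have h1 : Integrable (fun u => evenChar u q) μ :=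
    integrable_evenChar (by rw [abs_of_nonneg hq]; linarith) hi
  have h2 : Integrable (fun u => evenChar (max u (-M)) q) μ :=
    (integrable_const (Real.cosh (M * q))).mono'
      ((continuous_evenChar_left q).comp (by fun_prop)).aestronglyMeasurable
      (Eventually.of_forall fun u => abs_evenChar_cutoff_le hM q u)
  rw [← integral_sub h1 h2]
  refine (abs_integral_le_integral_abs).trans ?_
  calc ∫ u, |evenChar u q - evenChar (max u (-M)) q| ∂μ ≤ ∫ u, 2 / M * weight p u ∂μ :=
        integral_mono (h1.sub h2).abs (hi.const_mul _)
          fun u => abs_evenChar_sub_cutoff_le hM hq hqp u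
    _ = 2 / M * ∫ u, weight p u ∂μ := integral_const_mul _ _
    _ ≤ _ := mul_le_mul_of_nonneg_left (integral_weight_le hC h) (by positivity)

/-- The representing measure for a normalised kernel, as a single measure in the parameter of
`evenChar`. -/
lemma exists_probabilityMeasure_repr (g : ℝ → ℝ) (hgc : Continuous g) (hge : ∀ x, g (-x) = g x)
    (hg0 : g 0 = 1)
    (hpos : ∀ (n : ℕ) (c x : Fin n → ℝ),
        0 ≤ ∑ i, ∑ j, c i * c j * (g (x i + x j) + g (x i - x j))) :
    ∃ ν : ProbabilityMeasure ℝ, (∀ p : ℕ, Integrable (weight p) (ν : Measure ℝ)) ∧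
      ∀ x, g x = ∫ u, evenChar u x ∂(ν : Measure ℝ) := by
  obtain ⟨νs, htight, hval, hmom⟩ := exists_measure_seq g hgc hge hg0 hpos
  have hK : IsCompact (closure (Set.range νs)) :=
    isCompact_closure_of_isTightMeasureSet (by
      convert htight using 1
      ext μ
      simp)
  obtain ⟨ν, -, φ, hφ, hlim⟩ := hK.tendsto_subseq fun k => subset_closure (Set.mem_range_self k)
  have hmomν : ∀ p : ℕ, ∫⁻ u, ENNReal.ofReal (weight p u) ∂(ν : Measure ℝ)
      ≤ ENNReal.ofReal (g p + 2) := fun p => by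
    refine (lintegral_le_liminf_lintegral_of_forall_isOpen_measure_le_liminf_measure
      (μs := fun k => (νs (φ k) : Measure ℝ)) (continuous_weight p) (fun u => (weight_pos p u).le)
      fun G hG => ProbabilityMeasure.le_liminf_measure_open_of_tendsto hlim hG).trans ?_
    refine liminf_le_of_frequently_le' ?_
    exact (hφ.tendsto_atTop.eventually (hmom p)).frequently
  have hint : ∀ p : ℕ, Integrable (weight p) (ν : Measure ℝ) := fun p => integrable_weight (hmomν p)
  have hrat : ∀ q : ℚ, 0 ≤ q → g q = ∫ u, evenChar u q ∂(ν : Measure ℝ) := by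
    intro q hq
    have hqR : (0 : ℝ) ≤ q := by exact_mod_cast hq
    set p : ℕ := ⌈(q : ℝ)⌉₊ + 1 with hp
    have hqp : (q : ℝ) + 1 ≤ p := by rw [hp]; push_cast; linarith [Nat.le_ceil (q : ℝ)]
    -- A nonnegative bound for the `p`-th moments, usable for every measure involved.
    set C : ℝ := |g p + 2| with hCdef
    have hC : 0 ≤ C := abs_nonneg _
    have hle : ENNReal.ofReal (g p + 2) ≤ ENNReal.ofReal C :=
      ENNReal.ofReal_le_ofReal (le_abs_self _)
    have hbound : ∀ M : ℝ, 0 < M → |g q - ∫ u, evenChar u q ∂(ν : Measure ℝ)| ≤ 4 * C / M := by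
      intro M hM
      let F : BoundedContinuousFunction ℝ ℝ := BoundedContinuousFunction.ofNormedAddCommGroup
        (fun u => evenChar (max u (-M)) q) ((continuous_evenChar_left _).comp (by fun_prop))
        (Real.cosh (M * q)) (fun u => abs_evenChar_cutoff_le hM q u)
      have hF := ProbabilityMeasure.tendsto_iff_forall_integral_tendsto.1 hlim F
      have h1 : |g q - ∫ u, evenChar (max u (-M)) q ∂(ν : Measure ℝ)| ≤ 2 / M * C := by
        refine le_of_tendsto (hF.const_sub (g q)).abs ?_
        filter_upwards [hφ.tendsto_atTop.eventually (hmom p),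
          hφ.tendsto_atTop.eventually (hval q hq)] with k hk1 hk2
        rw [← hk2]
        exact abs_integral_sub_cutoff_le hM hqR hqp hC (hk1.trans hle)
      have h2 := abs_integral_sub_cutoff_le hM hqR hqp hC ((hmomν p).trans hle)
      have h3 := abs_sub_le (g q) (∫ u, evenChar (max u (-M)) q ∂(ν : Measure ℝ))
        (∫ u, evenChar u q ∂(ν : Measure ℝ))
      rw [abs_sub_comm] at h2
      calc _ ≤ 2 / M * C + 2 / M * C := h3.trans (add_le_add h1 h2)
        _ = 4 * C / M := by ring
    have hz : |g q - ∫ u, evenChar u q ∂(ν : Measure ℝ)| ≤ 0 :=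
      ge_of_tendsto (tendsto_const_nhds.div_atTop tendsto_id)
        ((eventually_gt_atTop (0 : ℝ)).mono hbound)
    exact sub_eq_zero.1 (abs_nonpos_iff.1 hz)
  refine ⟨ν, hint, ?_⟩
  have hcont : Continuous fun x => ∫ u, evenChar u x ∂(ν : Measure ℝ) := by
    rw [continuous_iff_continuousAt]
    intro x
    refine continuousAt_of_dominated (bound := weight (⌈|x| + 1⌉₊ : ℕ)) ?_ ?_ (hint _) ?_
    · exact Eventually.of_forall fun y => (continuous_evenChar_left y).aestronglyMeasurable
    · filter_upwards [Metric.ball_mem_nhds x one_pos] with y hy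
      refine Eventually.of_forall fun u => (abs_evenChar_le u y).trans (weight_mono ?_ u)
      rw [Metric.mem_ball, Real.dist_eq] at hy
      have := abs_sub_abs_le_abs_sub y x
      linarith [Nat.le_ceil (|x| + 1)]
    · exact Eventually.of_forall fun u =>
        (continuous_evenChar.comp (by fun_prop : Continuous fun y : ℝ => (u, y))).continuousAt
  have hall := Continuous.ext_on Rat.denseRange_cast hgc hcont (by
    rintro _ ⟨q, rfl⟩
    rcases le_total 0 q with hq | hq
    · exact hrat q hq
    · have := hrat (-q) (by linarith)
      push_cast at this
      simpa only [hge, evenChar_neg] using this)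
  exact fun x => congrFun hall x

/-! ### Symmetrised measures and the representation -/

/-- The average of a measure on `ℝ` and its reflection. -/
noncomputable def evenPart (ρ : Measure ℝ) : Measure ℝ :=
  (2⁻¹ : NNReal) • (ρ + ρ.map fun x => -x)

lemma map_neg_evenPart (ρ : Measure ℝ) : (evenPart ρ).map (fun x => -x) = evenPart ρ := by
  have hm : Measurable fun x : ℝ => -x := measurable_neg
  rw [evenPart, Measure.map_smul, Measure.map_add _ _ hm, Measure.map_map hm hm]
  have : (fun x : ℝ => -x) ∘ (fun x : ℝ => -x) = id := by ext; simp
  rw [this, Measure.map_id, add_comm]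

lemma lintegral_evenPart (ρ : Measure ℝ) {F : ℝ → ENNReal} (hFm : Measurable F)
    (hF : ∀ x, F (-x) = F x) : ∫⁻ x, F x ∂(evenPart ρ) = ∫⁻ x, F x ∂ρ := by
  have hm : Measurable fun x : ℝ => -x := measurable_neg
  rw [evenPart, lintegral_smul_measure, lintegral_add_measure, lintegral_map hFm hm]
  simp only [hF]
  rw [← two_mul, ENNReal.smul_def, smul_eq_mul, ← mul_assoc,
    ENNReal.coe_inv two_ne_zero, ENNReal.coe_ofNat,
    ENNReal.inv_mul_cancel two_ne_zero ENNReal.ofNat_ne_top, one_mul]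

lemma integral_evenPart (ρ : Measure ℝ) {F : ℝ → ℝ} (hFi : Integrable F ρ) (hFc : Continuous F)
    (hF : ∀ x, F (-x) = F x) : ∫ x, F x ∂(evenPart ρ) = ∫ x, F x ∂ρ := by
  have hm : Measurable fun x : ℝ => -x := measurable_neg
  have hFm : Integrable F (ρ.map fun x => -x) := by
    rw [integrable_map_measure hFc.aestronglyMeasurable hm.aemeasurable]
    simpa [Function.comp_def, hF] using hFi
  rw [evenPart, integral_smul_nnreal_measure, integral_add_measure hFi hFm,
    integral_map hm.aemeasurable hFc.aestronglyMeasurable]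
  simp only [hF]
  rw [← two_mul, NNReal.smul_def, smul_eq_mul]
  push_cast
  ring

lemma exp_mul_abs_le_weight {a p u : ℝ} (hap : a ≤ p) (hu : u < 0) :
    Real.exp (a * |u|) ≤ 2 * weight p u := by
  rw [weight, max_eq_left (by linarith), abs_of_neg hu, Real.cosh_eq]
  have h1 : Real.exp (a * -u) ≤ Real.exp (-u * p) := Real.exp_le_exp.2 (by nlinarith)
  linarith [Real.exp_pos (-(-u * p))]

/-- The degenerate case, which cannot be normalised: the quadratic form of the points `0, x` with
coefficients `s, 1` is affine in `s` when `g 0 = 0`, and it is bounded below. -/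
lemma eq_zero_of_kernel_of_zero (g : ℝ → ℝ) (hge : ∀ x, g (-x) = g x) (hg0 : g 0 = 0)
    (hpos : ∀ (n : ℕ) (c x : Fin n → ℝ),
        0 ≤ ∑ i, ∑ j, c i * c j * (g (x i + x j) + g (x i - x j))) (x : ℝ) : g x = 0 := by
  have key : ∀ s : ℝ, 0 ≤ 4 * s * g x + g (x + x) := fun s => by
    have := hpos 2 ![s, 1] ![0, x]
    simp [Fin.sum_univ_two, hg0, hge] at this
    linarith
  by_contra hne
  have := key (-(g (x + x) + 1) / (4 * g x))
  have h2 : 4 * (-(g (x + x) + 1) / (4 * g x)) * g x = -(g (x + x) + 1) := by field_simp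
  linarith

end Helpers

/-- Krein's theorem for evenly positive definite continuous functions on ℝ:
an even continuous function `f` with `∫ f · (φ ∗ φ*) ≥ 0` for every even
`φ ∈ C_c^∞(ℝ)` is represented by a finite positive even measure `μ₁` (cosine part)
together with a positive even measure `μ₂` (hyperbolic cosine part) all of whose
exponential moments are finite. -/
theorem krein_evenly_positive_definite
    (f : ℝ → ℂ) (hf_cont : Continuous f) (hf_even : ∀ x : ℝ, f (-x) = f x)
    (hf_pd : ∀ φ : ℝ → ℂ, ContDiff ℝ (⊤ : ℕ∞) φ → HasCompactSupport φ →
      (∀ x : ℝ, φ (-x) = φ x) →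
      0 ≤ ∫ x : ℝ, f x * (∫ y : ℝ, φ (x - y) * (starRingEnd ℂ) (φ (-y)))) :
    ∃ μ₁ μ₂ : Measure ℝ,
      μ₁.map (fun x => -x) = μ₁ ∧
      μ₂.map (fun x => -x) = μ₂ ∧
      IsFiniteMeasure μ₁ ∧
      (∀ a : ℝ, 0 < a → ∫⁻ l : ℝ, ENNReal.ofReal (Real.exp (a * |l|)) ∂μ₂ < ⊤) ∧
      (∀ x : ℝ, f x = ((∫ l : ℝ, Real.cos (l * x) ∂μ₁ : ℝ) : ℂ)
          + ((∫ l : ℝ, Real.cosh (l * x) ∂μ₂ : ℝ) : ℂ)) := by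
  obtain ⟨g, hfg, hgc, hge, hpos⟩ := exists_real_kernel f hf_cont hf_even hf_pd
  have hg0 : 0 ≤ g 0 := by
    have := hpos 1 ![1] ![0]
    simp at this
    linarith
  rcases hg0.eq_or_lt with hg0 | hg0
  · refine ⟨0, 0, by simp, by simp, inferInstance, by simp, fun x => ?_⟩
    rw [hfg, eq_zero_of_kernel_of_zero g hge hg0.symm hpos]
    simp
  -- Normalise so that `g 0 = 1`.
  obtain ⟨ν, hint, hrep⟩ := exists_probabilityMeasure_repr (fun x => g x / g 0)
    (hgc.div_const _) (fun x => by rw [hge]) (div_self hg0.ne') (fun n c x => by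
      have := div_nonneg (hpos n c x) hg0.le
      simp only [Finset.sum_div] at this
      refine this.trans_eq (Finset.sum_congr rfl fun i _ => Finset.sum_congr rfl fun j _ => ?_)
      ring)
  set c : NNReal := ⟨g 0, hg0.le⟩ with hc
  set ρ : Measure ℝ := c • (ν : Measure ℝ) with hρ
  have hrepρ : ∀ x, g x = ∫ u, evenChar u x ∂ρ := fun x => by
    have h1 : g x / g 0 = ∫ u, evenChar u x ∂(ν : Measure ℝ) := hrep x
    rw [hρ, integral_smul_nnreal_measure, ← h1, NNReal.smul_def, smul_eq_mul, hc]
    exact (mul_div_cancel₀ _ hg0.ne').symm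
  have hintρ : ∀ p : ℕ, Integrable (weight p) ρ := fun p => (hint p).smul_measure_nnreal
  have hcharρ : ∀ x, Integrable (fun u => evenChar u x) ρ := fun x =>
    integrable_evenChar (Nat.le_ceil |x|) (hintρ _)
  have hcos : ∀ x, Set.EqOn (fun u => evenChar u x) (fun u => Real.cos (u * x)) (Set.Ici 0) :=
    fun x u hu => evenChar_of_nonneg hu x
  have hcosh : ∀ x, Set.EqOn (fun u => evenChar u x) (fun u => Real.cosh (u * x)) (Set.Ici 0)ᶜ :=
    fun x u hu => evenChar_of_nonpos (le_of_lt (not_le.1 hu)) x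
  have hfin : IsFiniteMeasure (evenPart (ρ.restrict (Set.Ici 0))) := ⟨by
    rw [← lintegral_one, lintegral_evenPart _ measurable_const fun _ => rfl, lintegral_one]
    exact measure_lt_top _ _⟩
  refine ⟨evenPart (ρ.restrict (Set.Ici 0)), evenPart (ρ.restrict (Set.Ici 0)ᶜ),
    map_neg_evenPart _, map_neg_evenPart _, hfin, fun a _ => ?_, fun x => ?_⟩
  · rw [lintegral_evenPart _ (by fun_prop) fun x => by rw [abs_neg]]
    refine lt_of_le_of_lt (setLIntegral_mono' (g := fun u => ENNReal.ofReal (2 * weight ⌈a⌉₊ u))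
      measurableSet_Ici.compl fun u hu => ENNReal.ofReal_le_ofReal
        (exp_mul_abs_le_weight (Nat.le_ceil a) (not_le.1 hu))) ?_
    exact ((hintρ _).const_mul 2).integrableOn.lintegral_lt_top
  · rw [integral_evenPart _ ((integrableOn_congr_fun (hcos x) measurableSet_Ici).1
        (hcharρ x).integrableOn) (by fun_prop) (fun u => by rw [neg_mul, Real.cos_neg]),
      integral_evenPart _ ((integrableOn_congr_fun (hcosh x) measurableSet_Ici.compl).1
        (hcharρ x).integrableOn) (by fun_prop) (fun u => by rw [neg_mul, Real.cosh_neg]),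
      ← setIntegral_congr_fun measurableSet_Ici (hcos x),
      ← setIntegral_congr_fun measurableSet_Ici.compl (hcosh x), ← Complex.ofReal_add,
      integral_add_compl measurableSet_Ici (hcharρ x), hfg, hrepρ]
end

section
/- Let p : ℝ → ℂ be an even, continuous, bounded function such that ∫_ℝ p(λ)·(l ∗ l*)(λ) dλ ≥ 0 for every even function l ∈ L¹(ℝ). Then there exists a finite positive even Borel measure ν on ℝ such that p(λ) = ∫_ℝ e^{iλx} dν(x) for all λ ∈ ℝ; in particular p is a positive definite function on ℝ. -/
open MeasureTheory Filter
open scoped ComplexOrder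

open scoped Topology FourierTransform

/-!
Testing the hypothesis on the even functions `l(x) = exp(-2cx²) cos(xy)` turns `l ∗ l*` into a
positive multiple of `exp(-cx²) (cos(xy) + exp(-y²/(4c)))`, so
`∫ p(x) exp(-cx²) cos(xy) dx + exp(-y²/(4c)) F(c) ≥ 0`, where `F(c) = ∫ p(x) exp(-cx²) dx ≥ 0`
(`pos_gaussian_cos`). The second summand, a by-product of the evenness of `l`, is itself the Fourier
transform at `y` of `M(c) exp(-cx²)` with `M(c) = F(c) / √(π/c) ∈ [0, sup |p|]`. Since `p` is
even, the inequality therefore says that the continuous integrable function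
`(p(x) + M(c)) exp(-cx²)` has a nonnegative Fourier transform. That transform is then
integrable, and Fourier inversion exhibits the function as the characteristic function of a finite
measure (`exists_measure_of_fourier_nonneg`).

Let `c → 0` along a sequence for which `M(c)` converges to some `M₀ ≥ 0`. By tightness and
Prokhorov's theorem (`exists_measure_of_tendsto`), `p + M₀` is the characteristic function of a
finite measure `ν₀`. It remains to remove the constant `M₀`, which is the characteristic function of
`M₀ δ₀`: the inequality `F(c) ≥ 0` reads `∫ exp(-x²/(4c)) dν₀(x) ≥ M₀`
(`integral_charFun_mul_gaussian`), and `c → 0` gives `ν₀ {0} ≥ M₀`. Hence `ν = ν₀ - M₀ δ₀` is a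
positive measure with characteristic function `p`. It is even because a finite measure is determined
by its characteristic function, and positive definiteness follows from
`∑ p(x_k - x_j) ξ_k conj(ξ_j) = ∫ |∑ ξ_k exp(i x_k u)|² dν(u)`.
-/

/-! ### Gaussian integrals and the self-convolution of `exp(-2cx²) cos(xy)` -/

lemma integral_gaussian_mul_cexp {a : ℝ} (ha : 0 < a) (y : ℝ) :
    ∫ s : ℝ, ((Real.exp (-a * s ^ 2) : ℝ) : ℂ) * Complex.exp (s * y * Complex.I) =
      ((√(Real.pi / a) * Real.exp (-y ^ 2 / (4 * a)) : ℝ) : ℂ) := by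
  have h := fourierIntegral_gaussian (b := (a : ℂ)) (by simpa using ha) (y : ℂ)
  have hs : ((√(Real.pi / a) : ℝ) : ℂ) = ((Real.pi : ℂ) / a) ^ (1 / 2 : ℂ) := by
    rw [Real.sqrt_eq_rpow, Complex.ofReal_cpow (by positivity)]
    push_cast
    rfl
  push_cast
  rw [hs, ← h]
  refine integral_congr_ae (ae_of_all _ fun s => ?_)
  simp only
  rw [mul_comm]
  congr 2
  ring

lemma integrable_gaussian_mul_cos {a : ℝ} (ha : 0 < a) (y : ℝ) :
    Integrable fun s : ℝ => Real.exp (-a * s ^ 2) * Real.cos (s * y) := by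
  refine (integrable_exp_neg_mul_sq ha).mul_bdd (c := 1) (by fun_prop) (ae_of_all _ fun s => ?_)
  simpa using Real.abs_cos_le_one _

lemma integral_gaussian_mul_cos {a : ℝ} (ha : 0 < a) (y : ℝ) :
    ∫ s : ℝ, Real.exp (-a * s ^ 2) * Real.cos (s * y) =
      √(Real.pi / a) * Real.exp (-y ^ 2 / (4 * a)) := by
  have h := congrArg Complex.re (integral_gaussian_mul_cexp ha y)
  rw [Complex.ofReal_re] at h
  rw [← h]
  have hi : Integrable fun s : ℝ =>
      ((Real.exp (-a * s ^ 2) : ℝ) : ℂ) * Complex.exp (s * y * Complex.I) := by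
    refine (integrable_exp_neg_mul_sq ha).ofReal.mul_bdd (c := 1) (by fun_prop)
      (ae_of_all _ fun s => ?_)
    rw [← Complex.ofReal_mul, Complex.norm_exp_ofReal_mul_I]
  refine Eq.trans ?_ (integral_re hi)
  refine integral_congr_ae (ae_of_all _ fun s => ?_)
  change _ = Complex.re _
  rw [Complex.re_ofReal_mul, ← Complex.ofReal_mul, Complex.exp_ofReal_mul_I_re]

/-- With `l(x) = exp(-2cx²) cos(xy)`, this computes `l ∗ l`, by recentring at `x / 2` and expanding
the product of cosines. The term `cos(xy)` carries the frequency `y`; the term `exp(-y²/(4c))`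
comes from the interaction of the frequencies `y` and `-y`. -/
lemma gaussian_cos_conv {c : ℝ} (hc : 0 < c) (x y : ℝ) :
    ∫ t : ℝ, (Real.exp (-(2 * c) * (x - t) ^ 2) * Real.cos ((x - t) * y)) *
        (Real.exp (-(2 * c) * t ^ 2) * Real.cos (t * y)) =
      (√(Real.pi / (4 * c)) / 2) *
        (Real.exp (-c * x ^ 2) * (Real.cos (x * y) + Real.exp (-y ^ 2 / (4 * c)))) := by
  have h4 : (0 : ℝ) < 4 * c := by positivity
  -- recentre at the midpoint `x / 2`
  rw [← integral_add_right_eq_self _ (x / 2)]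
  have key : ∀ s : ℝ,
      (Real.exp (-(2 * c) * (x - (s + x / 2)) ^ 2) * Real.cos ((x - (s + x / 2)) * y)) *
        (Real.exp (-(2 * c) * (s + x / 2) ^ 2) * Real.cos ((s + x / 2) * y)) =
      (Real.exp (-c * x ^ 2) / 2) * (Real.cos (x * y) * Real.exp (-(4 * c) * s ^ 2) +
        Real.exp (-(4 * c) * s ^ 2) * Real.cos (s * (2 * y))) := by
    intro s
    have h1 : Real.exp (-(2 * c) * (x - (s + x / 2)) ^ 2) * Real.exp (-(2 * c) * (s + x / 2) ^ 2)
        = Real.exp (-c * x ^ 2) * Real.exp (-(4 * c) * s ^ 2) := by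
      rw [← Real.exp_add, ← Real.exp_add]
      ring_nf
    have h2 : 2 * Real.cos ((x - (s + x / 2)) * y) * Real.cos ((s + x / 2) * y)
        = Real.cos (x * y) + Real.cos (s * (2 * y)) := by
      rw [Real.two_mul_cos_mul_cos, ← Real.cos_neg (s * (2 * y)), add_comm]
      ring_nf
    linear_combination (Real.cos ((x - (s + x / 2)) * y) * Real.cos ((s + x / 2) * y)) * h1 +
      (Real.exp (-c * x ^ 2) * Real.exp (-(4 * c) * s ^ 2) / 2) * h2
  simp_rw [key]
  rw [integral_const_mul, integral_add ((integrable_exp_neg_mul_sq h4).const_mul _)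
    (integrable_gaussian_mul_cos h4 _), integral_const_mul, integral_gaussian,
    integral_gaussian_mul_cos h4]
  have h3 : -(2 * y) ^ 2 / (4 * (4 * c)) = -y ^ 2 / (4 * c) := by
    field_simp
    ring
  rw [h3]
  ring

/-- The only consequence of the positivity hypothesis that is used. At `y = 0` it says that
`∫ p(x) exp(-cx²) dx ≥ 0`. -/
lemma pos_gaussian_cos (p : ℝ → ℂ)
    (hp_pos : ∀ l : ℝ → ℂ, Integrable l → (∀ x : ℝ, l (-x) = l x) →
      0 ≤ ∫ x : ℝ, p x * (∫ t : ℝ, l (x - t) * (starRingEnd ℂ) (l (-t))))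
    {c : ℝ} (hc : 0 < c) (y : ℝ) :
    0 ≤ ∫ x : ℝ, p x *
      ((Real.exp (-c * x ^ 2) * (Real.cos (x * y) + Real.exp (-y ^ 2 / (4 * c))) : ℝ) : ℂ) := by
  have h := hp_pos
    (fun x => ((Real.exp (-(2 * c) * x ^ 2) * Real.cos (x * y) : ℝ) : ℂ))
    (integrable_gaussian_mul_cos (by positivity) y).ofReal (fun x => by simp)
  simp only [Complex.conj_ofReal, neg_sq, neg_mul _ y, Real.cos_neg] at h
  simp_rw [← Complex.ofReal_mul, integral_complex_ofReal, gaussian_cos_conv hc _ y] at h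
  have hK : 0 < √(Real.pi / (4 * c)) / 2 := by positivity
  have h2 : ∀ x : ℝ, p x * (((√(Real.pi / (4 * c)) / 2) *
        (Real.exp (-c * x ^ 2) * (Real.cos (x * y) + Real.exp (-y ^ 2 / (4 * c)))) : ℝ) : ℂ)
      = ((√(Real.pi / (4 * c)) / 2 : ℝ) : ℂ) * (p x *
      ((Real.exp (-c * x ^ 2) * (Real.cos (x * y) + Real.exp (-y ^ 2 / (4 * c))) : ℝ) : ℂ)) := by
    intro x
    rw [Complex.ofReal_mul]
    ring
  simp_rw [h2] at h
  rw [integral_const_mul] at h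
  have hK' : (0 : ℂ) ≤ ((√(Real.pi / (4 * c)) / 2 : ℝ) : ℂ)⁻¹ := by
    rw [← Complex.ofReal_inv]
    exact_mod_cast (inv_pos.2 hK).le
  have h3 := mul_nonneg hK' h
  rwa [inv_mul_cancel_left₀ (by exact_mod_cast hK.ne')] at h3

/-! ### Characteristic functions from nonnegative Fourier transforms -/

/-- Integrating a nonnegative `𝓕 f` against `exp(-w²/c)` amounts to integrating `f` against an
approximate identity at `0`, which converges to `f 0` as `c → ∞`; Fatou's lemma then bounds the
integral of `𝓕 f`. -/
lemma integrable_fourier_of_nonneg {f : ℝ → ℂ} (hf : Integrable f) (hc : ContinuousAt f 0)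
    (hpos : ∀ w, 0 ≤ 𝓕 f w) : Integrable (𝓕 f) := by
  have hcont : Continuous (𝓕 f) :=
    VectorFourier.fourierIntegral_continuous Real.continuous_fourierChar
      (by exact continuous_inner) hf
  have hA := Real.tendsto_integral_gaussian_smul' hf hc
  have hB : Tendsto (fun c : ℝ => ∫ w : ℝ, ((Real.exp (-c⁻¹ * w ^ 2) : ℝ) : ℂ) * 𝓕 f w)
      atTop (𝓝 (f 0)) := by
    refine hA.congr' ?_
    filter_upwards [Ioi_mem_atTop 0] with c (hc : 0 < c)
    have J : Integrable (fun w : ℝ ↦ Complex.exp (-c⁻¹ * ‖w‖ ^ 2 +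
        2 * Real.pi * Complex.I * inner ℝ (0 : ℝ) w)) :=
      GaussianFourier.integrable_cexp_neg_mul_sq_norm_add (by simpa) _ _
    have := (VectorFourier.integral_fourierIntegral_smul_eq_flip (L := innerₗ ℝ)
      Real.continuous_fourierChar continuous_inner J hf)
    simp only [flip_innerₗ] at this
    refine Eq.trans ?_ (this.trans ?_)
    · refine integral_congr_ae (ae_of_all _ fun w => ?_)
      simp only
      congr 1
      change _ = 𝓕 (fun w : ℝ ↦ Complex.exp (-c⁻¹ * ‖w‖ ^ 2 +
        2 * Real.pi * Complex.I * inner ℝ (0 : ℝ) w)) w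
      have := fourier_gaussian_innerProductSpace' (V := ℝ) (b := ((c⁻¹ : ℝ) : ℂ)) (by simpa) 0 w
      rw [this]
      simp
      left
      ring_nf
    · refine integral_congr_ae (ae_of_all _ fun w => ?_)
      simp only [inner_zero_left, Complex.ofReal_zero, mul_zero, add_zero, smul_eq_mul,
        Complex.ofReal_exp]
      congr 1
      simp [← Complex.ofReal_pow]
  have hre : ∀ w, 𝓕 f w = (((𝓕 f w).re : ℝ) : ℂ) := fun w =>
    (Complex.ext rfl (by simpa using (Complex.nonneg_iff.1 (hpos w)).2.symm))
  have hre0 : ∀ w, 0 ≤ (𝓕 f w).re := fun w => (Complex.nonneg_iff.1 (hpos w)).1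
  have hgcont : Continuous fun w => (𝓕 f w).re := Complex.continuous_re.comp hcont
  have hC : Tendsto (fun c : ℝ => ∫ w : ℝ, Real.exp (-c⁻¹ * w ^ 2) * (𝓕 f w).re)
      atTop (𝓝 (f 0).re) := by
    refine ((Complex.continuous_re.tendsto _).comp hB).congr fun c => ?_
    simp only [Function.comp]
    conv_lhs => enter [1, 2, w]; rw [hre w, ← Complex.ofReal_mul]
    rw [integral_complex_ofReal, Complex.ofReal_re]
  have hD : Tendsto (fun c : ℝ => ∫⁻ w : ℝ, ENNReal.ofReal (Real.exp (-c⁻¹ * w ^ 2) * (𝓕 f w).re))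
      atTop (𝓝 (ENNReal.ofReal (f 0).re)) := by
    refine (ENNReal.tendsto_ofReal hC).congr' ?_
    filter_upwards [Ioi_mem_atTop 0] with c (hc : 0 < c)
    refine ofReal_integral_eq_lintegral_ofReal ?_
      (ae_of_all _ fun w => mul_nonneg (Real.exp_pos _).le (hre0 w))
    refine (integrable_exp_neg_mul_sq (inv_pos.2 hc)).mul_bdd (c := ∫ v, ‖f v‖)
      hgcont.aestronglyMeasurable (ae_of_all _ fun w => ?_)
    exact (Complex.abs_re_le_norm _).trans
      (VectorFourier.norm_fourierIntegral_le_integral_norm _ _ _ f w)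
  refine ⟨hcont.aestronglyMeasurable, ?_⟩
  rw [hasFiniteIntegral_iff_norm]
  have hnorm : ∀ w, ENNReal.ofReal ‖𝓕 f w‖ =
      liminf (fun c : ℝ => ENNReal.ofReal (Real.exp (-c⁻¹ * w ^ 2) * (𝓕 f w).re)) atTop := by
    intro w
    refine (Tendsto.liminf_eq ?_).symm
    refine ENNReal.tendsto_ofReal ?_
    have h1 : ‖𝓕 f w‖ = Real.exp (-0 * w ^ 2) * (𝓕 f w).re := by
      rw [hre w, Complex.norm_real, Real.norm_of_nonneg (hre0 w)]
      simp
    rw [h1]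
    exact ((Real.continuous_exp.tendsto _).comp
      ((tendsto_inv_atTop_zero.neg).mul_const _)).mul_const _
  simp_rw [hnorm]
  refine (lintegral_liminf_le' fun c => ?_).trans_lt ?_
  · exact (by fun_prop : Continuous fun w : ℝ =>
      Real.exp (-c⁻¹ * w ^ 2) * (𝓕 f w).re).measurable.ennreal_ofReal.aemeasurable
  · rw [hD.liminf_eq]
    exact ENNReal.ofReal_lt_top

/-- Bochner's theorem for integrable functions. The measure is the image of `𝓕 f · dw` under
multiplication by `2π`, which reconciles the normalization `exp(2πi w t)` of `𝓕⁻` with the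
normalization `exp(i x t)` of `charFun`. -/
lemma exists_measure_of_fourier_nonneg {f : ℝ → ℂ} (hf : Integrable f) (hc : Continuous f)
    (hpos : ∀ w, 0 ≤ 𝓕 f w) :
    ∃ μ : Measure ℝ, IsFiniteMeasure μ ∧ ∀ t, charFun μ t = f t := by
  have hint := integrable_fourier_of_nonneg hf hc.continuousAt hpos
  have hcont : Continuous (𝓕 f) :=
    VectorFourier.fourierIntegral_continuous Real.continuous_fourierChar
      (by exact continuous_inner) hf
  have hre : ∀ w, 𝓕 f w = (((𝓕 f w).re : ℝ) : ℂ) := fun w =>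
    (Complex.ext rfl (by simpa using (Complex.nonneg_iff.1 (hpos w)).2.symm))
  have hre0 : ∀ w, 0 ≤ (𝓕 f w).re := fun w => (Complex.nonneg_iff.1 (hpos w)).1
  have hfin : IsFiniteMeasure (volume.withDensity fun w => ENNReal.ofReal (𝓕 f w).re) :=
    isFiniteMeasure_withDensity_ofReal hint.re.2
  refine ⟨(volume.withDensity fun w => ENNReal.ofReal (𝓕 f w).re).map ((2 * Real.pi) * ·),
    inferInstance, fun t => ?_⟩
  rw [charFun_map_mul, charFun_apply_real, integral_withDensity_eq_integral_toReal_smul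
    (f := fun w => ENNReal.ofReal (𝓕 f w).re) (Complex.continuous_re.comp hcont).measurable.ennreal_ofReal
    (ae_of_all _ fun w => ENNReal.ofReal_lt_top),
    ← congrFun (hc.fourierInv_fourier_eq hf hint) t, Real.fourierInv_eq']
  refine integral_congr_ae (ae_of_all _ fun w => ?_)
  simp only
  rw [ENNReal.toReal_ofReal (hre0 w), Complex.real_smul, ← hre w, smul_eq_mul, mul_comm]
  congr 2
  simp
  ring

/-! ### Limits of characteristic functions -/

/-- Pointwise limits of characteristic functions of finite measures are characteristic functions of
finite measures as soon as they are continuous. When the total masses tend to `0` the limit measure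
is `0`; otherwise the measures are normalized and a weak limit point is taken. -/
lemma exists_measure_of_tendsto {f : ℝ → ℂ} (hc : Continuous f) (μ : ℕ → Measure ℝ)
    [hμ : ∀ n, IsFiniteMeasure (μ n)]
    (h : ∀ t, Tendsto (fun n => charFun (μ n) t) atTop (𝓝 (f t))) :
    ∃ ν : Measure ℝ, IsFiniteMeasure ν ∧ ∀ t, charFun ν t = f t := by
  have hmass : ∀ n t, ‖charFun (μ n) t‖ ≤ ‖charFun (μ n) 0‖ := fun n t => by
    refine (norm_charFun_le t).trans (le_of_eq ?_)
    rw [charFun_zero, Complex.norm_real, Real.norm_of_nonneg measureReal_nonneg]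
  have h0 : Tendsto (fun n => (μ n).real Set.univ) atTop (𝓝 ‖f 0‖) := by
    refine (h 0).norm.congr fun n => ?_
    rw [charFun_zero, Complex.norm_real, Real.norm_of_nonneg measureReal_nonneg]
  have hf0 : f 0 = (‖f 0‖ : ℂ) := by
    refine tendsto_nhds_unique (h 0) ?_
    simp_rw [charFun_zero]
    exact (Complex.continuous_ofReal.tendsto _).comp h0
  rcases eq_or_ne (f 0) 0 with hz | hz
  · refine ⟨0, inferInstance, fun t => ?_⟩
    have : ‖f t‖ ≤ ‖f 0‖ := le_of_tendsto_of_tendsto' (h t).norm (h 0).norm fun n => hmass n t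
    rw [hz, norm_zero, norm_le_zero_iff] at this
    simp [this]
  · let m : ℕ → FiniteMeasure ℝ := fun n => ⟨μ n, hμ n⟩
    let q : ℕ → ProbabilityMeasure ℝ := fun n => (m n).normalize
    have hpos : 0 < ‖f 0‖ := norm_pos_iff.2 hz
    have hq : ∀ t, Tendsto (fun n => charFun (q n : Measure ℝ) t) atTop (𝓝 (f t / f 0)) := by
      intro t
      refine ((h t).div (h 0) hz).congr' ?_
      filter_upwards [h0.eventually (lt_mem_nhds hpos)] with n hn
      have hmn : m n ≠ 0 := by
        intro h
        have : μ n = 0 := congrArg (fun x : FiniteMeasure ℝ => (x : Measure ℝ)) h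
        simp [this] at hn
      have hav : charFun (q n : Measure ℝ) t = _ :=
        (FiniteMeasure.average_eq_integral_normalize (m n) hmn _).symm
      change charFun (μ n) t / charFun (μ n) 0 = _
      rw [hav, average_eq, ← charFun_apply, charFun_zero, Complex.real_smul, div_eq_inv_mul,
        Complex.ofReal_inv]
      rfl
    have hcq : Continuous fun t => f t / f 0 := hc.div_const _
    have htight : IsTightMeasureSet (Set.range fun n => (q n : Measure ℝ)) :=
      isTightMeasureSet_of_tendsto_charFun hcq.continuousAt hq
    have hcpt : IsCompact (closure (Set.range q)) :=
      isCompact_closure_of_isTightMeasureSet (by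
        convert htight using 1
        ext; simp)
    obtain ⟨P, -, φ, hφ, hP⟩ := hcpt.tendsto_subseq fun n => subset_closure (Set.mem_range_self n)
    rw [ProbabilityMeasure.tendsto_iff_forall_integral_rclike_tendsto ℂ] at hP
    refine ⟨ENNReal.ofReal ‖f 0‖ • (P : Measure ℝ),
      Measure.smul_finite _ ENNReal.ofReal_ne_top, fun t => ?_⟩
    have h1 : charFun (P : Measure ℝ) t = f t / f 0 := by
      refine tendsto_nhds_unique ?_ ((hq t).comp hφ.tendsto_atTop)
      simp_rw [Function.comp_def, charFun_eq_integral_innerProbChar]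
      exact hP _
    rw [charFun_apply, integral_smul_measure, ← charFun_apply, h1,
      ENNReal.toReal_ofReal (norm_nonneg _), Complex.real_smul, ← hf0, mul_div_cancel₀ _ hz]


/-! ### Even functions, Gaussian averages and positive definiteness -/

lemma fourier_of_even {f : ℝ → ℂ} (hf : Integrable f) (he : ∀ x, f (-x) = f x) (w : ℝ) :
    𝓕 f w = ∫ x : ℝ, f x * ((Real.cos (x * (2 * Real.pi * w)) : ℝ) : ℂ) := by
  let g : ℝ → ℂ := fun x => f x * Complex.exp ((x * (2 * Real.pi * w) : ℝ) * Complex.I)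
  have hg : Integrable g := hf.mul_bdd (c := 1) (by fun_prop)
    (ae_of_all _ fun s => (Complex.norm_exp_ofReal_mul_I _).le)
  have h1 : 𝓕 f w = ∫ x, g (-x) := by
    rw [Real.fourier_eq']
    refine integral_congr_ae (ae_of_all _ fun x => ?_)
    simp only [g, he, smul_eq_mul]
    rw [mul_comm]
    congr 3
    simp
    ring
  have h2 : ∫ x, (g x + g (-x)) = ∫ x : ℝ, 2 * (f x * ((Real.cos (x * (2 * Real.pi * w)) : ℝ) : ℂ)) := by
    refine integral_congr_ae (ae_of_all _ fun x => ?_)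
    simp only [g, he, neg_mul, Complex.ofReal_cos, Complex.cos, Complex.ofReal_neg]
    ring
  rw [integral_add hg hg.comp_neg, integral_neg_eq_self, integral_const_mul] at h2
  rw [integral_neg_eq_self] at h1
  rw [h1]
  linear_combination h2 / 2

/-- Fubini, together with the fact that the Fourier transform of a Gaussian is a Gaussian. -/
lemma integral_charFun_mul_gaussian (μ : Measure ℝ) [IsFiniteMeasure μ] {c : ℝ} (hc : 0 < c) :
    ∫ t : ℝ, charFun μ t * ((Real.exp (-c * t ^ 2) : ℝ) : ℂ) =
      ((√(Real.pi / c) * ∫ x, Real.exp (-x ^ 2 / (4 * c)) ∂μ : ℝ) : ℂ) := by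
  simp_rw [charFun_apply_real, ← integral_mul_const]
  rw [integral_integral_swap]
  · rw [← integral_const_mul, ← integral_complex_ofReal]
    refine integral_congr_ae (ae_of_all _ fun x => ?_)
    simp only
    rw [← integral_gaussian_mul_cexp hc x]
    simp_rw [mul_comm]
  · have h1 : Integrable (fun z : ℝ × ℝ => ((Real.exp (-c * z.1 ^ 2) : ℝ) : ℂ) * (1 : ℂ))
        (volume.prod μ) :=
      (integrable_exp_neg_mul_sq hc).ofReal.mul_prod (integrable_const (1 : ℂ))
    refine (h1.bdd_mul (c := 1) (f := fun z : ℝ × ℝ => Complex.exp (z.1 * z.2 * Complex.I))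
      (by fun_prop) (ae_of_all _ fun z => ?_)).congr (ae_of_all _ fun z => ?_)
    · rw [← Complex.ofReal_mul, Complex.norm_exp_ofReal_mul_I]
    · simp [Function.uncurry]

/-- The sum is the integral of `|∑ ξ_k exp(i x_k u)|²` against `ν`. -/
lemma posDef_charFun (ν : Measure ℝ) [IsFiniteMeasure ν]
    (m : ℕ) (x : Fin m → ℝ) (ξ : Fin m → ℂ) :
    0 ≤ ∑ k : Fin m, ∑ j : Fin m, charFun ν (x k - x j) * ξ k * (starRingEnd ℂ) (ξ j) := by
  have hi : ∀ t : ℝ, Integrable (fun u : ℝ => Complex.exp (t * u * Complex.I)) ν := fun t => by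
    refine (integrable_const (1 : ℝ)).mono' (by fun_prop) (ae_of_all _ fun u => ?_)
    rw [← Complex.ofReal_mul, Complex.norm_exp_ofReal_mul_I]
  have h : ∑ k : Fin m, ∑ j : Fin m, charFun ν (x k - x j) * ξ k * (starRingEnd ℂ) (ξ j) =
      ∫ u : ℝ, ((‖∑ k, ξ k * Complex.exp (x k * u * Complex.I)‖ ^ 2 : ℝ) : ℂ) ∂ν := by
    have hpt : ∀ u : ℝ, ((‖∑ k, ξ k * Complex.exp (x k * u * Complex.I)‖ ^ 2 : ℝ) : ℂ) =
        ∑ k, ∑ j, Complex.exp ((x k - x j : ℝ) * u * Complex.I) *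
          (ξ k * (starRingEnd ℂ) (ξ j)) := fun u => by
      rw [Complex.ofReal_pow, ← Complex.mul_conj', map_sum, Finset.sum_mul_sum]
      refine Finset.sum_congr rfl fun k _ => Finset.sum_congr rfl fun j _ => ?_
      have he : Complex.exp ((x k - x j : ℝ) * u * Complex.I) = Complex.exp (x k * u * Complex.I) *
          (starRingEnd ℂ) (Complex.exp (x j * u * Complex.I)) := by
        rw [← Complex.exp_conj, ← Complex.exp_add]
        congr 1
        simp
        ring
      rw [he, map_mul]
      ring
    simp_rw [hpt]
    rw [integral_finsetSum _ fun k _ => integrable_finsetSum _ fun j _ => (hi _).mul_const _]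
    refine Finset.sum_congr rfl fun k _ => ?_
    rw [integral_finsetSum _ fun j _ => (hi _).mul_const _]
    refine Finset.sum_congr rfl fun j _ => ?_
    rw [integral_mul_const, charFun_apply_real, mul_assoc]
  rw [h, integral_complex_ofReal]
  exact_mod_cast integral_nonneg fun u => by positivity

/-! ### The even Bochner theorem -/

/-- Even Bochner theorem: an even, continuous, bounded function `p` on ℝ which is a
positive linear functional on the convolution algebra of even `L¹` functions is the
Fourier transform of a finite positive even Borel measure; in particular `p` is a
positive definite function on ℝ. -/
theorem even_bochner_theorem
    (p : ℝ → ℂ) (hp_cont : Continuous p) (hp_even : ∀ x : ℝ, p (-x) = p x)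
    (hp_bdd : ∃ C : ℝ, ∀ x : ℝ, ‖p x‖ ≤ C)
    (hp_pos : ∀ l : ℝ → ℂ, Integrable l → (∀ x : ℝ, l (-x) = l x) →
      0 ≤ ∫ x : ℝ, p x * (∫ t : ℝ, l (x - t) * (starRingEnd ℂ) (l (-t)))) :
    ∃ ν : Measure ℝ,
      IsFiniteMeasure ν ∧
      ν.map (fun x => -x) = ν ∧
      (∀ lam : ℝ, p lam = ∫ x : ℝ, Complex.exp (Complex.I * lam * x) ∂ν) ∧
      (∀ (m : ℕ) (x : Fin m → ℝ) (ξ : Fin m → ℂ),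
        0 ≤ ∑ k : Fin m, ∑ j : Fin m, p (x k - x j) * ξ k * (starRingEnd ℂ) (ξ j)) := by
  obtain ⟨C, hC⟩ := hp_bdd
  have hC0 : 0 ≤ C := (norm_nonneg _).trans (hC 0)
  let E : ℝ → ℝ → ℝ := fun c x => Real.exp (-c * x ^ 2)
  have hE : ∀ {c : ℝ}, 0 < c → Integrable fun x => ((E c x : ℝ) : ℂ) := fun hc =>
    (integrable_exp_neg_mul_sq hc).ofReal
  have hEc : ∀ c, Continuous (E c) := fun c => by fun_prop
  have hpE : ∀ {c : ℝ}, 0 < c → Integrable fun x => p x * ((E c x : ℝ) : ℂ) := fun hc =>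
    (hE hc).bdd_mul hp_cont.aestronglyMeasurable (ae_of_all _ hC)
  let F : ℝ → ℂ := fun c => ∫ x, p x * ((E c x : ℝ) : ℂ)
  have hF : ∀ {c : ℝ}, 0 < c → 0 ≤ F c := fun {c} hc => by
    have h := pos_gaussian_cos p hp_pos hc 0
    have h2 : F c = (2⁻¹ : ℝ) * ∫ x : ℝ, p x *
        ((Real.exp (-c * x ^ 2) * (Real.cos (x * 0) + Real.exp (-0 ^ 2 / (4 * c))) : ℝ) : ℂ) := by
      rw [← integral_const_mul]
      refine integral_congr_ae (ae_of_all _ fun x => ?_)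
      simp only [E]
      norm_num
      ring
    rw [h2]
    exact mul_nonneg (by exact_mod_cast (by norm_num : (0 : ℝ) ≤ 2⁻¹)) h
  have hFre : ∀ {c : ℝ}, 0 < c → F c = (((F c).re : ℝ) : ℂ) := fun {c} hc =>
    (Complex.ext rfl (by simpa using (Complex.nonneg_iff.1 (hF hc)).2.symm))
  let M : ℝ → ℝ := fun c => (F c).re / √(Real.pi / c)
  have hM0 : ∀ {c : ℝ}, 0 < c → 0 ≤ M c := fun hc =>
    div_nonneg (Complex.nonneg_iff.1 (hF hc)).1 (Real.sqrt_nonneg _)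
  have hMC : ∀ {c : ℝ}, 0 < c → M c ≤ C := fun {c} hc => by
    have hs : 0 < √(Real.pi / c) := Real.sqrt_pos.2 (div_pos Real.pi_pos hc)
    rw [div_le_iff₀ hs, ← integral_gaussian, ← integral_const_mul]
    refine (Complex.re_le_norm _).trans ?_
    refine norm_integral_le_of_norm_le ((integrable_exp_neg_mul_sq hc).const_mul C)
      (ae_of_all _ fun x => ?_)
    rw [norm_mul, Complex.norm_real, Real.norm_of_nonneg (Real.exp_pos _).le]
    exact mul_le_mul_of_nonneg_right (hC x) (Real.exp_pos _).le
  -- `M c` is chosen so that the Fourier transform of `M c * E c` is `exp (-y ^ 2 / (4 * c)) * F c`;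
  -- then `(p + M c) * E c` is a continuous integrable function with nonnegative Fourier transform
  have hstep : ∀ {c : ℝ}, 0 < c → ∃ μ : Measure ℝ, IsFiniteMeasure μ ∧
      ∀ t, charFun μ t = (p t + M c) * ((E c t : ℝ) : ℂ) := fun {c} hc => by
    have hint : Integrable fun t => (p t + M c) * ((E c t : ℝ) : ℂ) := by
      simp_rw [add_mul]
      exact (hpE hc).add ((hE hc).const_mul _)
    refine exists_measure_of_fourier_nonneg hint (by fun_prop) fun w => ?_
    rw [fourier_of_even hint (fun x => by simp [E, hp_even])]
    set y := 2 * Real.pi * w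
    refine (pos_gaussian_cos p hp_pos hc y).trans_eq ?_
    have hs : √(Real.pi / c) ≠ 0 := (Real.sqrt_pos.2 (div_pos Real.pi_pos hc)).ne'
    have hpc : Integrable fun x : ℝ => p x * ((E c x : ℝ) : ℂ) * ((Real.cos (x * y) : ℝ) : ℂ) := by
      refine (hpE hc).mul_bdd (c := 1) (by fun_prop) (ae_of_all _ fun s => ?_)
      rw [Complex.norm_real]
      exact Real.abs_cos_le_one _
    have h1 : ∀ x : ℝ, p x *
        ((Real.exp (-c * x ^ 2) * (Real.cos (x * y) + Real.exp (-y ^ 2 / (4 * c))) : ℝ) : ℂ) =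
        p x * ((E c x : ℝ) : ℂ) * ((Real.cos (x * y) : ℝ) : ℂ) +
        p x * ((E c x : ℝ) : ℂ) * ((Real.exp (-y ^ 2 / (4 * c)) : ℝ) : ℂ) := fun x => by
      simp only [E]
      push_cast
      ring
    have h2 : ∀ x : ℝ, (p x + M c) * ((E c x : ℝ) : ℂ) * ((Real.cos (x * y) : ℝ) : ℂ) =
        p x * ((E c x : ℝ) : ℂ) * ((Real.cos (x * y) : ℝ) : ℂ) +
        (M c : ℂ) * ((E c x * Real.cos (x * y) : ℝ) : ℂ) := fun x => by
      push_cast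
      ring
    have hMc : Integrable fun x : ℝ => (M c : ℂ) * ((E c x * Real.cos (x * y) : ℝ) : ℂ) :=
      (integrable_gaussian_mul_cos hc y).ofReal.const_mul _
    have h3 : ∫ x, E c x * Real.cos (x * y) =
        √(Real.pi / c) * Real.exp (-y ^ 2 / (4 * c)) := integral_gaussian_mul_cos hc y
    simp_rw [h1, h2]
    rw [integral_add hpc ((hpE hc).mul_const _), integral_add hpc hMc,
      integral_mul_const, integral_const_mul, integral_complex_ofReal, h3]
    change _ + F c * _ = _
    rw [hFre hc, ← Complex.ofReal_mul, ← Complex.ofReal_mul]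
    congr 2
    simp only [M]
    field_simp
  -- compactness of `[0, C]` gives a limit of `M c` along a sequence of scales tending to `0`
  -- the factor `4` makes `exp (-x ^ 2 / (4 * c n))` equal to `exp (-(n + 1) * x ^ 2)`
  let c : ℕ → ℝ := fun n => 1 / (4 * ((n : ℝ) + 1))
  have hcpos : ∀ n, 0 < c n := fun n => by positivity
  have hc0 : Tendsto c atTop (𝓝 0) := by
    have := (tendsto_one_div_add_atTop_nhds_zero_nat (𝕜 := ℝ)).const_mul (1 / 4)
    rw [mul_zero] at this
    refine this.congr fun n => ?_
    simp only [c]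
    field_simp
  obtain ⟨M₀, hM₀, φ, hφ, hlim⟩ := (isCompact_Icc (a := (0 : ℝ)) (b := C)).tendsto_subseq
    (x := fun n => M (c n)) fun n => ⟨hM0 (hcpos n), hMC (hcpos n)⟩
  choose μ hμfin hμ using fun n => hstep (hcpos (φ n))
  obtain ⟨ν₀, hν₀fin, hν₀⟩ := exists_measure_of_tendsto (f := fun t => p t + M₀) (by fun_prop) μ
    (fun t => by
      simp_rw [hμ]
      have h1 : Tendsto (fun n => ((M (c (φ n)) : ℝ) : ℂ)) atTop (𝓝 (M₀ : ℂ)) :=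
        (Complex.continuous_ofReal.tendsto _).comp hlim
      have h2 : Tendsto (fun n => ((E (c (φ n)) t : ℝ) : ℂ)) atTop (𝓝 ((E 0 t : ℝ) : ℂ)) := by
        have : Continuous fun a : ℝ => ((E a t : ℝ) : ℂ) := by fun_prop
        exact (this.tendsto 0).comp (hc0.comp hφ.tendsto_atTop)
      simpa [E] using (tendsto_const_nhds.add h1).mul h2)
  -- the atom of `ν₀` at the origin has mass at least `M₀`
  have hatom : M₀ ≤ ν₀.real {0} := by
    have hge : ∀ n, M₀ ≤ ∫ x, Real.exp (-x ^ 2 / (4 * c n)) ∂ν₀ := fun n => by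
      have hs : 0 < √(Real.pi / c n) := Real.sqrt_pos.2 (div_pos Real.pi_pos (hcpos n))
      have h1 := hF (hcpos n)
      have h2 : F (c n) = ((√(Real.pi / c n) * (∫ x, Real.exp (-x ^ 2 / (4 * c n)) ∂ν₀) -
          M₀ * √(Real.pi / c n) : ℝ) : ℂ) := by
        rw [Complex.ofReal_sub, ← integral_charFun_mul_gaussian ν₀ (hcpos n), Complex.ofReal_mul,
          ← integral_gaussian (c n), ← integral_complex_ofReal, ← integral_const_mul,
          ← integral_sub]
        · refine integral_congr_ae (ae_of_all _ fun x => ?_)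
          simp only [hν₀, E]
          ring
        · simp_rw [hν₀, add_mul]
          exact (hpE (hcpos n)).add ((hE (hcpos n)).const_mul _)
        · exact (hE (hcpos n)).const_mul _
      rw [h2] at h1
      have h3 : 0 ≤ √(Real.pi / c n) * (∫ x, Real.exp (-x ^ 2 / (4 * c n)) ∂ν₀) -
          M₀ * √(Real.pi / c n) := by exact_mod_cast h1
      nlinarith
    have htend : Tendsto (fun n => ∫ x, Real.exp (-x ^ 2 / (4 * c n)) ∂ν₀) atTop
        (𝓝 (∫ x, Set.indicator {(0 : ℝ)} (fun _ => (1 : ℝ)) x ∂ν₀)) := by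
      refine tendsto_integral_of_dominated_convergence (fun _ => 1)
        (fun n => by fun_prop) (integrable_const _) (fun n => ae_of_all _ fun x => ?_)
        (ae_of_all _ fun x => ?_)
      · rw [Real.norm_of_nonneg (Real.exp_pos _).le, Real.exp_le_one_iff]
        exact div_nonpos_of_nonpos_of_nonneg (by nlinarith [sq_nonneg x])
          (by have := hcpos n; positivity)
      · rcases eq_or_ne x 0 with rfl | hx
        · simp
        · have hx2 : 0 < x ^ 2 := by positivity
          rw [Set.indicator_of_notMem (by simpa using hx)]
          refine Real.tendsto_exp_atBot.comp ?_
          have h1 : Tendsto (fun n : ℕ => -(((n : ℝ) + 1) * x ^ 2)) atTop atBot :=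
            tendsto_neg_atTop_atBot.comp ((tendsto_atTop_add_const_right _ _
              tendsto_natCast_atTop_atTop).atTop_mul_const hx2)
          refine h1.congr fun n => ?_
          simp only [c]
          field_simp
    rw [integral_indicator_const _ (measurableSet_singleton _), smul_eq_mul, mul_one] at htend
    exact ge_of_tendsto' htend hge
  -- `ν₀ - M₀ δ₀`, written as a sum of positive measures
  let ν : Measure ℝ := ν₀.restrict {0}ᶜ + ENNReal.ofReal (ν₀.real {0} - M₀) • Measure.dirac 0
  have hfd : IsFiniteMeasure (ENNReal.ofReal (ν₀.real {0} - M₀) • Measure.dirac (0 : ℝ)) :=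
    Measure.smul_finite _ ENNReal.ofReal_ne_top
  have hν : IsFiniteMeasure ν := inferInstance
  have hchar : ∀ t, charFun ν t = p t := by
    intro t
    have hi : ∀ (μ : Measure ℝ) [IsFiniteMeasure μ],
        Integrable (fun u : ℝ => Complex.exp (t * u * Complex.I)) μ := fun μ _ => by
      refine (integrable_const (1 : ℝ)).mono' (by fun_prop) (ae_of_all _ fun u => ?_)
      rw [← Complex.ofReal_mul, Complex.norm_exp_ofReal_mul_I]
    have h0 := hν₀ t
    rw [charFun_apply_real, ← integral_add_compl (measurableSet_singleton (0 : ℝ)) (hi ν₀),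
      integral_singleton] at h0
    rw [charFun_apply_real, integral_add_measure (hi _) (hi _), integral_smul_measure,
      integral_dirac, ENNReal.toReal_ofReal (sub_nonneg.2 hatom)]
    simp only [Complex.ofReal_zero, mul_zero, zero_mul, Complex.exp_zero, Complex.real_smul,
      Complex.ofReal_sub] at h0 ⊢
    linear_combination h0
  refine ⟨ν, hν, ?_, fun t => ?_, fun m x ξ => ?_⟩
  · refine Measure.ext_of_charFun (funext fun t => ?_)
    have : (fun x : ℝ => -x) = fun x => (-1) * x := by funext x; ring
    rw [this, charFun_map_mul, hchar, hchar, neg_one_mul, hp_even]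
  · rw [← hchar, charFun_apply_real]
    refine integral_congr_ae (ae_of_all _ fun x => ?_)
    simp only
    congr 1
    ring
  · simp_rw [← hchar]
    exact posDef_charFun ν m x ξ
end
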